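/- arXiv:2106.15358 — 4 statements merged into one kernel-verified Lean document; each statement's English description precedes it below -/
import Mathlib

section
/- Let G : B_2^k(r) → ℝ^n be an L-Lipschitz function, let x ∈ ℝ^n, let A ∈ ℝ^{m×n} have i.i.d. standard normal entries, and let y = |Ax| + η for a noise vector η ∈ ℝ^m. Let p be a point of Range(G) closest to x in the ℓ₂ norm, and let q ∈ Range(G) satisfy ‖y − |Aq|‖₂² ≤ min_{w ∈ Range(G)} ‖y − |Aw|‖₂² + τ for some τ > 0. Then for any δ > 0 there exist universal constants C, c, C' > 0 such that if m ≥ C k log(Lr/δ), then with probability at least 1 − e^{−c m} over the draw of A, min{‖q − x‖₂, ‖q + x‖₂} ≤ C' (‖p − x‖₂ + (‖η‖₂ + √τ)/√m + δ). -/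
open MeasureTheory ProbabilityTheory Matrix

/-- The squared-sum Euclidean (ℓ₂) norm of a vector in `Fin d → ℝ`. -/
noncomputable def l2norm {d : ℕ} (v : Fin d → ℝ) : ℝ := Real.sqrt (∑ i, (v i) ^ 2)

/-- `A : Ω → ℝ^{m×n}` (given through its rows) has i.i.d. standard normal entries. -/
def IIDStdGaussian {Ω : Type} [MeasurableSpace Ω] (P : Measure Ω) (m n : ℕ)
    (A : Ω → Fin m → Fin n → ℝ) : Prop :=
  Measure.map A P = Measure.pi fun _ : Fin m => Measure.pi fun _ : Fin n => gaussianReal 0 1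

/-- Membership in `Range(G) = {G(z) : z ∈ B₂ᵏ(r)}`. -/
def InRange {k n : ℕ} (G : (Fin k → ℝ) → Fin n → ℝ) (r : ℝ) (w : Fin n → ℝ) : Prop :=
  ∃ z : Fin k → ℝ, l2norm z ≤ r ∧ G z = w

lemma l2norm_eq {d : ℕ} (v : Fin d → ℝ) : l2norm v = ‖(WithLp.toLp 2 v : EuclideanSpace ℝ (Fin d))‖ := by
  simp [l2norm, EuclideanSpace.norm_eq]

lemma l2norm_nonneg {d : ℕ} (v : Fin d → ℝ) : 0 ≤ l2norm v := Real.sqrt_nonneg _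

lemma l2norm_sq {d : ℕ} (v : Fin d → ℝ) : l2norm v ^ 2 = ∑ i, (v i) ^ 2 :=
  Real.sq_sqrt (Finset.sum_nonneg fun _ _ => sq_nonneg _)

lemma l2norm_add_le {d : ℕ} (v w : Fin d → ℝ) : l2norm (v + w) ≤ l2norm v + l2norm w := by
  simp only [l2norm_eq, WithLp.toLp_add]; exact norm_add_le _ _

lemma l2norm_sub_comm {d : ℕ} (v w : Fin d → ℝ) : l2norm (v - w) = l2norm (w - v) := by
  simp only [l2norm_eq, WithLp.toLp_sub]; exact norm_sub_rev _ _

lemma l2norm_tri {d : ℕ} (u v w : Fin d → ℝ) : l2norm (u - w) ≤ l2norm (u - v) + l2norm (v - w) := by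
  have := l2norm_add_le (u - v) (v - w)
  simpa using this

lemma l2norm_mono {d : ℕ} (v w : Fin d → ℝ) (h : ∀ i, |v i| ≤ |w i|) : l2norm v ≤ l2norm w :=
  Real.sqrt_le_sqrt (Finset.sum_le_sum fun i _ => sq_le_sq.2 (h i))

/-- The Gaussian measure on a row. -/
noncomputable abbrev gam (n : ℕ) : Measure (Fin n → ℝ) := Measure.pi fun _ : Fin n => gaussianReal 0 1

lemma map_dot {n : ℕ} (u : Fin n → ℝ) (hu : l2norm u = 1) :
    (gam n).map (fun a => a ⬝ᵥ u) = gaussianReal 0 1 := by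
  let L : StrongDual ℝ (EuclideanSpace ℝ (Fin n)) := innerSL ℝ (WithLp.toLp 2 u)
  have h1 : (fun a : Fin n → ℝ => a ⬝ᵥ u) = L ∘ (WithLp.toLp 2) := by
    ext a
    simp [L, EuclideanSpace.inner_eq_star_dotProduct]
  have hL : ‖L‖ = 1 := by
    simp only [L, innerSL_apply_norm, ← l2norm_eq, hu]
  rw [h1, ← Measure.map_map (by fun_prop) (by fun_prop), map_pi_eq_stdGaussian,
    IsGaussian.map_eq_gaussianReal, integral_strongDual_stdGaussian, variance_dual_stdGaussian, hL]
  simp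

lemma gint_pos : ∫ x, Real.exp (x ^ 2 / 4) ∂(gaussianReal 0 1) = √2 := by
  rw [integral_gaussianReal_eq_integral_smul one_ne_zero]
  have : ∀ x : ℝ, gaussianPDFReal 0 1 x • Real.exp (x ^ 2 / 4) =
      (√(2 * Real.pi))⁻¹ * Real.exp (-(1/4) * x ^ 2) := by
    intro x
    simp only [gaussianPDFReal, smul_eq_mul, mul_assoc, ← Real.exp_add]
    norm_num
    ring_nf
    simp
  simp_rw [this]
  rw [integral_const_mul, integral_gaussian, ← Real.sqrt_inv, ← Real.sqrt_mul (by positivity)]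
  congr 1
  have := Real.pi_pos
  field_simp
  norm_num

lemma gint_neg : ∫ x, Real.exp (-(63/2) * x ^ 2) ∂(gaussianReal 0 1) = 1 / 8 := by
  rw [integral_gaussianReal_eq_integral_smul one_ne_zero]
  have : ∀ x : ℝ, gaussianPDFReal 0 1 x • Real.exp (-(63/2) * x ^ 2) =
      (√(2 * Real.pi))⁻¹ * Real.exp (-32 * x ^ 2) := by
    intro x
    simp only [gaussianPDFReal, smul_eq_mul, mul_assoc, ← Real.exp_add]
    norm_num
    ring_nf
    simp
  simp_rw [this]
  rw [integral_const_mul, integral_gaussian, ← Real.sqrt_inv, ← Real.sqrt_mul (by positivity)]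
  have := Real.pi_pos
  rw [show (2 * Real.pi)⁻¹ * (Real.pi / 32) = (1 / 8) ^ 2 by field_simp; norm_num]
  rw [Real.sqrt_sq (by norm_num)]

lemma rowint {n : ℕ} (f : ℝ → ℝ) (hf : Continuous f) (b : ℝ) (hb : b ≠ 0)
    (hi : ∫ x, f x ∂(gaussianReal 0 1) = b)
    (u : Fin n → ℝ) (hu : 0 < l2norm u) :
    Integrable (fun a => f ((a ⬝ᵥ u) / l2norm u)) (gam n) ∧
    ∫ a, f ((a ⬝ᵥ u) / l2norm u) ∂(gam n) = b := by
  have hI : Integrable f (gaussianReal 0 1) := by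
    by_contra h
    rw [integral_undef h] at hi
    exact hb hi.symm
  have hn : l2norm ((l2norm u)⁻¹ • u) = 1 := by
    rw [l2norm_eq, WithLp.toLp_smul, norm_smul, ← l2norm_eq, Real.norm_eq_abs, abs_of_pos (by positivity)]
    field_simp
  have hmap := map_dot _ hn
  have hmeas : Measurable (fun a : Fin n → ℝ => a ⬝ᵥ ((l2norm u)⁻¹ • u)) := by
    unfold dotProduct; fun_prop
  have he : (fun a : Fin n → ℝ => f ((a ⬝ᵥ u) / l2norm u)) = f ∘ (fun a => a ⬝ᵥ ((l2norm u)⁻¹ • u)) := by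
    ext a
    simp [dotProduct_smul, div_eq_inv_mul]
  rw [he]
  constructor
  · rw [← hmap] at hI
    exact hI.comp_measurable hmeas
  · rw [← hmap, integral_map hmeas.aemeasurable hf.aestronglyMeasurable] at hi
    exact hi

lemma chernoff {m n : ℕ} (h : (Fin n → ℝ) → ℝ) (B t : ℝ)
    (hI : Integrable (fun a => Real.exp (h a)) (gam n)) (hB : ∫ a, Real.exp (h a) ∂(gam n) ≤ B) :
    (Measure.pi fun _ : Fin m => gam n) {A | t * m ≤ ∑ j, h (A j)} ≤
      ENNReal.ofReal ((B * Real.exp (-t)) ^ m) := by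
  have hI2 : Integrable (fun A : Fin m → Fin n → ℝ => ∏ j, Real.exp (h (A j)))
      (Measure.pi fun _ : Fin m => gam n) :=
    Integrable.fintype_prod (f := fun _ : Fin m => fun a => Real.exp (h a)) (fun _ => hI)
  have h1 := mul_meas_ge_le_integral_of_nonneg
    (ae_of_all _ fun A => Finset.prod_nonneg fun j _ => (Real.exp_pos _).le) hI2 (Real.exp (t * m))
  rw [integral_fintype_prod_eq_pow (f := fun a => Real.exp (h a))] at h1
  have hs : {A : Fin m → Fin n → ℝ | t * m ≤ ∑ j, h (A j)} =
      {A | Real.exp (t * m) ≤ ∏ j, Real.exp (h (A j))} := by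
    ext A
    simp [← Real.exp_sum]
  rw [hs, ← ofReal_measureReal]
  apply ENNReal.ofReal_le_ofReal
  have h0 : 0 ≤ ∫ a, Real.exp (h a) ∂(gam n) := integral_nonneg fun _ => (Real.exp_pos _).le
  have h2 : (∫ a, Real.exp (h a) ∂(gam n)) ^ m ≤ B ^ m := pow_le_pow_left₀ h0 hB _
  simp only [Fintype.card_fin] at h1
  have h3 : Real.exp (-t) ^ m = (Real.exp (t * m))⁻¹ := by
    rw [← Real.exp_nat_mul, ← Real.exp_neg]; ring_nf
  rw [mul_pow, h3, ← div_eq_mul_inv, le_div_iff₀ (Real.exp_pos _), mul_comm]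
  exact h1.trans h2

lemma upper_tail {m n : ℕ} (u : Fin n → ℝ) (s : ℝ) :
    (Measure.pi fun _ : Fin m => gam n)
      {A | s * m * l2norm u ^ 2 < ∑ j, (A j ⬝ᵥ u) ^ 2} ≤
      ENNReal.ofReal (Real.exp (-(s / 4 - 1 / 2) * m)) := by
  rcases (l2norm_nonneg u).eq_or_lt with hu | hu
  · have : u = 0 := by
      rw [l2norm_eq] at hu
      have := norm_eq_zero.1 hu.symm
      simpa using this
    subst this
    rw [← hu]
    simp
  · have hr := rowint (fun x => Real.exp (x ^ 2 / 4)) (by fun_prop) _ (by positivity) gint_pos u hu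
    have hc := chernoff (m := m) (fun a => (a ⬝ᵥ u / l2norm u) ^ 2 / 4) √2 (s / 4) hr.1 hr.2.le
    refine (measure_mono ?_).trans (hc.trans (ENNReal.ofReal_le_ofReal ?_))
    · intro A hA
      simp only [Set.mem_ofPred_eq] at hA ⊢
      rw [← Finset.sum_div]
      simp only [div_pow]
      rw [← Finset.sum_div, div_mul_eq_mul_div]
      gcongr
      rw [le_div_iff₀ (by positivity)]
      exact hA.le
    · have : √2 ≤ Real.exp (1 / 2) := by
        rw [Real.sqrt_le_left (by positivity), ← Real.exp_nat_mul]
        have := Real.add_one_le_exp 1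
        norm_num at this ⊢
        linarith
      calc (√2 * Real.exp (-(s / 4))) ^ m ≤ (Real.exp (1 / 2) * Real.exp (-(s / 4))) ^ m := by gcongr
        _ = _ := by
          rw [← Real.exp_add, ← Real.exp_nat_mul]; ring_nf

lemma lower_tail {m n : ℕ} (u v : Fin n → ℝ) :
    (Measure.pi fun _ : Fin m => gam n)
      {A | ∑ j, (min |A j ⬝ᵥ u| |A j ⬝ᵥ v|) ^ 2 < 1 / 100 * m * (min (l2norm u) (l2norm v)) ^ 2} ≤
      ENNReal.ofReal (Real.exp (-(m : ℝ))) := by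
  set μ := min (l2norm u) (l2norm v) with hμ
  rcases (le_min (l2norm_nonneg u) (l2norm_nonneg v)).eq_or_lt with h0 | h0
  · rw [← hμ] at h0
    rw [← h0]
    have : {A : Fin m → Fin n → ℝ | ∑ j, (min |A j ⬝ᵥ u| |A j ⬝ᵥ v|) ^ 2 < 1 / 100 * m * (0:ℝ) ^ 2} = ∅ := by
      ext A
      simp only [Set.mem_ofPred_eq, Set.mem_empty_iff_false, iff_false, not_lt]
      have : 0 ≤ ∑ j, (min |A j ⬝ᵥ u| |A j ⬝ᵥ v|) ^ 2 := Finset.sum_nonneg fun _ _ => sq_nonneg _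
      simpa using this
    rw [this]; simp
  · have hu : 0 < l2norm u := h0.trans_le (min_le_left _ _)
    have hv : 0 < l2norm v := h0.trans_le (min_le_right _ _)
    rw [← hμ] at h0
    have hru := rowint (fun x => Real.exp (-(63/2) * x ^ 2)) (by fun_prop) _ (by positivity) gint_neg u hu
    have hrv := rowint (fun x => Real.exp (-(63/2) * x ^ 2)) (by fun_prop) _ (by positivity) gint_neg v hv
    let h : (Fin n → ℝ) → ℝ := fun a => -(63/2) * ((min |a ⬝ᵥ u| |a ⬝ᵥ v|) / μ) ^ 2
    have hmeas : Measurable h := by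
      simp only [h, dotProduct]; fun_prop
    have hle : ∀ a, Real.exp (h a) ≤ Real.exp (-(63/2) * (a ⬝ᵥ u / l2norm u) ^ 2) +
        Real.exp (-(63/2) * (a ⬝ᵥ v / l2norm v) ^ 2) := by
      intro a
      have key : ∀ w : Fin n → ℝ, μ ≤ l2norm w → min |a ⬝ᵥ u| |a ⬝ᵥ v| = |a ⬝ᵥ w| →
          Real.exp (h a) ≤ Real.exp (-(63/2) * (a ⬝ᵥ w / l2norm w) ^ 2) := by
        intro w hw hm
        simp only [h, hm]
        apply Real.exp_le_exp.2
        simp only [div_pow, sq_abs]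
        have : (a ⬝ᵥ w) ^ 2 / l2norm w ^ 2 ≤ (a ⬝ᵥ w) ^ 2 / μ ^ 2 := by gcongr
        linarith
      rcases min_choice |a ⬝ᵥ u| |a ⬝ᵥ v| with hm | hm
      · have := key u (min_le_left _ _) hm
        have := Real.exp_pos (-(63/2) * (a ⬝ᵥ v / l2norm v) ^ 2)
        linarith
      · have := key v (min_le_right _ _) hm
        have := Real.exp_pos (-(63/2) * (a ⬝ᵥ u / l2norm u) ^ 2)
        linarith
    have hsum := hru.1.add hrv.1
    have hI : Integrable (fun a => Real.exp (h a)) (gam n) := by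
      refine hsum.mono' (by fun_prop) (ae_of_all _ fun a => ?_)
      rw [Real.norm_eq_abs, abs_of_pos (Real.exp_pos _)]
      exact hle a
    have hB : ∫ a, Real.exp (h a) ∂(gam n) ≤ 1 / 4 := by
      refine (integral_mono hI hsum hle).trans ?_
      have := integral_add hru.1 hrv.1
      rw [hru.2, hrv.2] at this
      refine this.le.trans ?_
      norm_num
    have hc := chernoff (m := m) h (1/4) (-(63/200)) hI hB
    refine (measure_mono ?_).trans (hc.trans (ENNReal.ofReal_le_ofReal ?_))
    · intro A hA
      simp only [Set.mem_ofPred_eq, h] at hA ⊢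
      simp only [div_pow]
      rw [← Finset.mul_sum, ← Finset.sum_div]
      have : (∑ j, (min |A j ⬝ᵥ u| |A j ⬝ᵥ v|) ^ 2) / μ ^ 2 ≤ 1 / 100 * m := by
        rw [div_le_iff₀ (by positivity)]; exact hA.le
      linarith
    · have h1 : (1/4 : ℝ) * Real.exp (63/200) ≤ Real.exp (-1) := by
        have e1 : Real.exp (263/200) ≤ 4 := by
          have h3 : Real.exp (263/200) = Real.exp 1 * Real.exp (63/200) := by
            rw [← Real.exp_add]; norm_num
          have h4 : Real.exp (63/200) ≤ 1 / (1 - 63/200) := by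
            have := Real.add_one_le_exp (-(63/200))
            rw [le_div_iff₀ (by norm_num)]
            have h5 : Real.exp (63/200) * Real.exp (-(63/200)) = 1 := by
              rw [← Real.exp_add]; norm_num
            nlinarith [Real.exp_pos (63/200)]
          have := Real.exp_one_lt_d9
          rw [h3]
          nlinarith [Real.exp_pos (63/200), Real.exp_pos 1]
        have h6 : Real.exp (63/200) = Real.exp (263/200) * Real.exp (-1) := by
          rw [← Real.exp_add]; norm_num
        rw [h6]
        nlinarith [Real.exp_pos (-1)]
      calc _ = ((1/4 : ℝ) * Real.exp (63/200)) ^ m := by norm_num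
        _ ≤ (Real.exp (-1)) ^ m := by gcongr
        _ = _ := by rw [← Real.exp_nat_mul]; ring_nf

lemma sep_card {k : ℕ} (r ε : ℝ) (hr : 0 < r) (hε : 0 < ε)
    (s : Finset (EuclideanSpace ℝ (Fin k))) (hs : ∀ c ∈ s, ‖c‖ ≤ r)
    (h : ∀ c ∈ s, ∀ d ∈ s, c ≠ d → ε ≤ ‖c - d‖) : (s.card : ℝ) ≤ (1 + 2 * r / ε) ^ k := by
  let μ : Measure (EuclideanSpace ℝ (Fin k)) := volume
  set A := ⋃ c ∈ s, Metric.ball c (ε / 2) with hA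
  have D : Set.Pairwise (s : Set (EuclideanSpace ℝ (Fin k)))
      (Function.onFun Disjoint fun c => Metric.ball c (ε / 2)) := by
    rintro c hc d hd hcd
    apply Metric.ball_disjoint_ball
    rw [dist_eq_norm]
    have := h c hc d hd hcd
    linarith
  have A_subset : A ⊆ Metric.ball 0 (r + ε / 2) := by
    refine Set.iUnion₂_subset fun x hx => ?_
    apply Metric.ball_subset_ball'
    rw [dist_zero_right]
    have := hs x hx
    linarith
  have hρ : 0 < r + ε / 2 := by positivity
  have hδ : 0 < ε / 2 := by positivity
  have I : (s.card : ENNReal) * ENNReal.ofReal ((ε / 2) ^ k) * μ (Metric.ball 0 1) ≤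
      ENNReal.ofReal ((r + ε / 2) ^ k) * μ (Metric.ball 0 1) :=
    calc
      (s.card : ENNReal) * ENNReal.ofReal ((ε / 2) ^ k) * μ (Metric.ball 0 1) = μ A := by
        rw [hA, measure_biUnion_finset D fun c _ => measurableSet_ball]
        simp only [μ.addHaar_ball_of_pos _ hδ, finrank_euclideanSpace, Fintype.card_fin]
        simp only [Finset.sum_const, nsmul_eq_mul, mul_assoc]
      _ ≤ μ (Metric.ball 0 (r + ε / 2)) := measure_mono A_subset
      _ = _ := by
        simp only [μ.addHaar_ball_of_pos _ hρ, finrank_euclideanSpace, Fintype.card_fin]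
  have J : (s.card : ENNReal) * ENNReal.ofReal ((ε / 2) ^ k) ≤ ENNReal.ofReal ((r + ε / 2) ^ k) :=
    (ENNReal.mul_le_mul_iff_left (Metric.measure_ball_pos _ _ zero_lt_one).ne' measure_ball_lt_top.ne).1 I
  have K := ENNReal.toReal_le_of_le_ofReal (pow_nonneg hρ.le _) J
  rw [ENNReal.toReal_mul, ENNReal.toReal_natCast, ENNReal.toReal_ofReal (by positivity)] at K
  rw [← le_div_iff₀ (by positivity), ← div_pow] at K
  refine K.trans (le_of_eq ?_)
  congr 1
  field_simp
  ring

lemma exists_net' {k : ℕ} (r ε : ℝ) (hr : 0 < r) (hε : 0 < ε) :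
    ∃ N : Finset (EuclideanSpace ℝ (Fin k)), (∀ z ∈ N, ‖z‖ ≤ r) ∧
      (∀ z, ‖z‖ ≤ r → ∃ y ∈ N, ‖z - y‖ ≤ ε) ∧ (N.card : ℝ) ≤ (1 + 2 * r / ε) ^ k := by
  classical
  by_contra hcon
  have step : ∀ j : ℕ, ∃ s : Finset (EuclideanSpace ℝ (Fin k)), s.card = j ∧ (∀ c ∈ s, ‖c‖ ≤ r) ∧
      (∀ c ∈ s, ∀ d ∈ s, c ≠ d → ε ≤ ‖c - d‖) := by
    intro j
    induction j with
    | zero => exact ⟨∅, by simp⟩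
    | succ j ih =>
      obtain ⟨s, hc, hs, h⟩ := ih
      have : ¬ ∀ z, ‖z‖ ≤ r → ∃ y ∈ s, ‖z - y‖ ≤ ε :=
        fun hh => hcon ⟨s, hs, hh, sep_card r ε hr hε s hs h⟩
      push Not at this
      obtain ⟨z, hz, hzs⟩ := this
      have hzn : z ∉ s := fun hz' => by
        have := hzs z hz'
        simp at this
        linarith
      refine ⟨insert z s, by rw [Finset.card_insert_of_notMem hzn, hc], ?_, ?_⟩
      · intro c hc
        rcases Finset.mem_insert.1 hc with rfl | hc
        · exact hz
        · exact hs c hc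
      · intro c hc d hd hcd
        rcases Finset.mem_insert.1 hc with rfl | hc' <;> rcases Finset.mem_insert.1 hd with rfl | hd'
        · exact absurd rfl hcd
        · exact (hzs d hd').le
        · rw [norm_sub_rev]; exact (hzs c hc').le
        · exact h c hc' d hd' hcd
  obtain ⟨j, hj⟩ := exists_nat_gt ((1 + 2 * r / ε) ^ k)
  obtain ⟨s, hc, hs, h⟩ := step j
  have := sep_card r ε hr hε s hs h
  rw [hc] at this
  linarith

lemma exists_net {k : ℕ} (r ε : ℝ) (hr : 0 < r) (hε : 0 < ε) :
    ∃ N : Finset (Fin k → ℝ), (∀ z ∈ N, l2norm z ≤ r) ∧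
      (∀ z, l2norm z ≤ r → ∃ y ∈ N, l2norm (z - y) ≤ ε) ∧ (N.card : ℝ) ≤ (1 + 2 * r / ε) ^ k := by
  classical
  obtain ⟨N, h1, h2, h3⟩ := exists_net' (k := k) r ε hr hε
  refine ⟨N.image (fun z => WithLp.ofLp z), ?_, ?_, ?_⟩
  · intro z hz
    obtain ⟨y, hy, rfl⟩ := Finset.mem_image.1 hz
    rw [l2norm_eq]; exact h1 y hy
  · intro z hz
    obtain ⟨y, hy, hyz⟩ := h2 (WithLp.toLp 2 z) (by rwa [← l2norm_eq])
    refine ⟨_, Finset.mem_image_of_mem _ hy, ?_⟩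
    rw [l2norm_eq]; exact hyz
  · refine le_trans ?_ h3
    exact_mod_cast Finset.card_image_le

/-- Matrix-vector product through rows. -/
def av {m n : ℕ} (M : Fin m → Fin n → ℝ) (w : Fin n → ℝ) : Fin m → ℝ := fun j => M j ⬝ᵥ w

lemma av_sub {m n : ℕ} (M : Fin m → Fin n → ℝ) (v w : Fin n → ℝ) : av M (v - w) = av M v - av M w := by
  ext j; simp [av, dotProduct_sub]

lemma av_bound {m n : ℕ} (M : Fin m → Fin n → ℝ) : ∃ K : ℝ, ∀ w, l2norm (av M w) ≤ K * l2norm w := by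
  refine ⟨√(∑ j, l2norm (M j) ^ 2), fun w => ?_⟩
  rw [l2norm, ← Real.sqrt_sq (l2norm_nonneg w), ← Real.sqrt_mul (Finset.sum_nonneg fun _ _ => sq_nonneg _)]
  apply Real.sqrt_le_sqrt
  rw [Finset.sum_mul]
  refine Finset.sum_le_sum fun j _ => ?_
  rw [l2norm_sq, l2norm_sq]
  exact Finset.sum_mul_sq_le_sq_mul_sq Finset.univ (M j) w

lemma chain {m n : ℕ} (M : Fin m → Fin n → ℝ) (δ : ℝ) (w : ℕ → Fin n → ℝ) (q : Fin n → ℝ)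
    (hq : ∀ i, l2norm (w i - q) ≤ δ / 2 ^ i)
    (hM : ∀ i : ℕ, l2norm (av M (w i - w (i + 1))) ≤ 4 * (i + 1) * √m * l2norm (w i - w (i + 1))) :
    l2norm (av M (w 0 - q)) ≤ 32 * √m * δ := by
  have hδ : 0 ≤ δ := by have := (l2norm_nonneg _).trans (hq 0); simpa using this
  have h1 : ∀ N : ℕ, l2norm (av M (w 0 - w N)) ≤ 8 * √m * δ * (4 - (2 * N + 4) / 2 ^ N) := by
    intro N
    induction N with
    | zero => simp [l2norm, av]
    | succ N ih =>
      have t : l2norm (av M (w 0 - w (N + 1))) ≤ l2norm (av M (w 0 - w N)) + l2norm (av M (w N - w (N+1))) := by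
        simp only [av_sub]; exact l2norm_tri _ _ _
      have d : l2norm (w N - w (N+1)) ≤ 2 * δ / 2 ^ N := by
        have a := l2norm_tri (w N) q (w (N+1))
        have b := hq N
        have c := hq (N+1)
        rw [l2norm_sub_comm] at c
        have e : δ / 2 ^ (N+1) ≤ δ / 2 ^ N := by
          gcongr
          · norm_num
          · omega
        have : 2 * δ / 2 ^ N = δ / 2 ^ N + δ / 2 ^ N := by ring
        linarith
      have g := hM N
      have g2 : 4 * ((N:ℝ) + 1) * √m * l2norm (w N - w (N + 1)) ≤ 4 * ((N:ℝ) + 1) * √m * (2 * δ / 2 ^ N) := by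
        gcongr
      have : 8 * √m * δ * (4 - (2 * ((N + 1 : ℕ) : ℝ) + 4) / 2 ^ (N + 1)) =
         8 * √m * δ * (4 - (2 * N + 4) / 2 ^ N) + 4 * ((N:ℝ) + 1) * √m * (2 * δ / 2 ^ N) := by
        push_cast
        field_simp
        ring
      linarith
  obtain ⟨K, hK⟩ := av_bound M
  have h2 : ∀ N : ℕ, l2norm (av M (w 0 - q)) ≤ 32 * √m * δ + |K| * (δ * (1 / 2) ^ N) := by
    intro N
    have t : l2norm (av M (w 0 - q)) ≤ l2norm (av M (w 0 - w N)) + l2norm (av M (w N - q)) := by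
      simp only [av_sub]; exact l2norm_tri _ _ _
    have a := h1 N
    have b : 8 * √m * δ * (4 - (2 * N + 4) / 2 ^ N) ≤ 8 * √m * δ * 4 := by
      gcongr
      have : (0:ℝ) ≤ (2 * N + 4) / 2 ^ N := by positivity
      linarith
    have c : l2norm (av M (w N - q)) ≤ |K| * (δ * (1/2) ^ N) := by
      calc _ ≤ K * l2norm (w N - q) := hK _
        _ ≤ |K| * l2norm (w N - q) := by
          have := l2norm_nonneg (w N - q)
          gcongr
          exact le_abs_self K
        _ ≤ |K| * (δ / 2 ^ N) := by gcongr; exact hq N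
        _ = _ := by simp [div_eq_mul_inv]
    linarith
  have lim : Filter.Tendsto (fun N : ℕ => 32 * √m * δ + |K| * (δ * (1 / 2 : ℝ) ^ N)) Filter.atTop
      (nhds (32 * √m * δ + |K| * (δ * 0))) :=
    ((((tendsto_pow_atTop_nhds_zero_of_lt_one (by norm_num) (by norm_num)).const_mul δ).const_mul _).const_add _)
  simp only [mul_zero, add_zero] at lim
  exact ge_of_tendsto' lim h2

lemma abs_abs_sub_eq (a b : ℝ) : |(|a| - |b|)| = min |a - b| |a + b| := by
  grind

/-- Deterministic recovery on the good event. -/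
lemma deterministic {m n : ℕ} (hm : 0 < m) (M : Fin m → Fin n → ℝ) (δ τ : ℝ)
    (hτ : 0 < τ) (w : ℕ → Fin n → ℝ) (q x p : Fin n → ℝ) (η : Fin m → ℝ)
    (hq : ∀ i, l2norm (w i - q) ≤ δ / 2 ^ i)
    (hM : ∀ i : ℕ, l2norm (av M (w i - w (i + 1))) ≤ 4 * (i + 1) * √m * l2norm (w i - w (i + 1)))
    (hp : l2norm (av M (x - p)) ≤ 4 * √m * l2norm (p - x))
    (hlow : √m / 10 * min (l2norm (x - w 0)) (l2norm (x + w 0)) ≤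
      l2norm (fun j => min |M j ⬝ᵥ (x - w 0)| |M j ⬝ᵥ (x + w 0)|))
    (hopt : (l2norm fun i => (|M i ⬝ᵥ x| + η i) - |M i ⬝ᵥ q|) ^ 2 ≤
            (l2norm fun i => (|M i ⬝ᵥ x| + η i) - |M i ⬝ᵥ p|) ^ 2 + τ) :
    min (l2norm (q - x)) (l2norm (q + x)) ≤
      321 * (l2norm (p - x) + (l2norm η + √τ) / √m + δ) := by
  have hch := chain M δ w q hq hM
  have hδ := hq 0
  simp only [pow_zero, div_one] at hδ
  have hs : 0 < √(m:ℝ) := by positivity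
  let ab : (Fin n → ℝ) → Fin m → ℝ := fun v i => |M i ⬝ᵥ v|
  have hab : ∀ u v, l2norm (ab u - ab v) ≤ l2norm (av M (u - v)) := by
    intro u v
    apply l2norm_mono
    intro j
    simp only [ab, av, Pi.sub_apply, dotProduct_sub]
    exact abs_abs_sub_abs_le _ _
  have e1 : l2norm (ab x + η - ab q) ≤ l2norm (ab x + η - ab p) + √τ := by
    apply le_of_sq_le_sq _ (by have := l2norm_nonneg (ab x + η - ab p); positivity)
    have h1 : l2norm (ab x + η - ab q) ^ 2 ≤ l2norm (ab x + η - ab p) ^ 2 + τ := hopt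
    have h2 := Real.sq_sqrt hτ.le
    have h3 := l2norm_nonneg (ab x + η - ab p)
    nlinarith [mul_nonneg h3 (Real.sqrt_nonneg τ)]
  have e2 : l2norm (ab x - ab q) ≤ l2norm (ab x + η - ab q) + l2norm η := by
    have := l2norm_tri (ab x - ab q) (-η) 0
    rw [show ab x - ab q - -η = ab x + η - ab q by abel, sub_zero, sub_zero] at this
    have h : l2norm (-η) = l2norm η := by simp [l2norm]
    rwa [h] at this
  have e3 : l2norm (ab x + η - ab p) ≤ l2norm (ab x - ab p) + l2norm η := by
    have := l2norm_add_le (ab x - ab p) η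
    rwa [show ab x - ab p + η = ab x + η - ab p by abel] at this
  have e4 := hab x p
  have e5 := l2norm_tri (ab x) (ab q) (ab (w 0))
  have e6 := hab q (w 0)
  have e7 : l2norm (av M (q - w 0)) = l2norm (av M (w 0 - q)) := by
    simp only [av_sub]; exact l2norm_sub_comm _ _
  have e8 : l2norm (fun j => min |M j ⬝ᵥ (x - w 0)| |M j ⬝ᵥ (x + w 0)|) ≤ l2norm (ab x - ab (w 0)) := by
    apply l2norm_mono
    intro j
    simp only [ab, Pi.sub_apply, dotProduct_sub, dotProduct_add]
    rw [← abs_abs_sub_eq, abs_abs]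
  have e9 : √m / 10 * min (l2norm (x - w 0)) (l2norm (x + w 0)) ≤
      4 * √m * l2norm (p - x) + 2 * l2norm η + √τ + 32 * √m * δ := by linarith
  have e10 : min (l2norm (q - x)) (l2norm (q + x)) ≤ min (l2norm (x - w 0)) (l2norm (x + w 0)) + δ := by
    rw [← min_add_add_right]
    apply min_le_min
    · have := l2norm_tri x (w 0) q
      rw [l2norm_sub_comm x q] at this
      linarith
    · have := l2norm_add_le (x + w 0) (q - w 0)
      rw [show x + w 0 + (q - w 0) = q + x by abel, l2norm_sub_comm] at this
      linarith
  have e11 : min (l2norm (x - w 0)) (l2norm (x + w 0)) ≤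
      40 * l2norm (p - x) + (20 * l2norm η + 10 * √τ) / √m + 320 * δ := by
    rw [← mul_le_mul_iff_right₀ (show 0 < √(m:ℝ) / 10 by positivity)]
    refine e9.trans (le_of_eq ?_)
    field_simp
    ring
  have e12 : (20 * l2norm η + 10 * √τ) / √m ≤ 321 * ((l2norm η + √τ) / √m) := by
    rw [← mul_div_assoc]
    have := l2norm_nonneg η
    have := Real.sqrt_nonneg τ
    gcongr
    linarith
  have := l2norm_nonneg (p - x)
  linarith

lemma union_bound {Ω : Type} [MeasurableSpace Ω] (P : Measure Ω) (m : ℕ) (k : ℕ)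
    (hm : 7 ≤ (m : ℝ)) (N : ℕ → Finset (Fin k → ℝ))
    (hN : ∀ i, ((N i).card : ℝ) ≤ Real.exp ((i + 3) * m / 7))
    (B0 : Set Ω) (B1 : (Fin k → ℝ) → Set Ω) (B2 : ℕ → (Fin k → ℝ) → (Fin k → ℝ) → Set Ω)
    (h0 : P B0 ≤ ENNReal.ofReal (Real.exp (-(16 / 4 - 1 / 2) * m)))
    (h1 : ∀ u, P (B1 u) ≤ ENNReal.ofReal (Real.exp (-(m : ℝ))))
    (h2 : ∀ i u v, P (B2 i u v) ≤
      ENNReal.ofReal (Real.exp (-((16 * ((i : ℝ) + 1) ^ 2) / 4 - 1 / 2) * m))) :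
    P (B0 ∪ (⋃ u ∈ N 0, B1 u) ∪ ⋃ i, ⋃ u ∈ N i, ⋃ v ∈ N (i + 1), B2 i u v) ≤
      ENNReal.ofReal (Real.exp (-(1 / 7) * m)) := by
  set a : ℝ := Real.exp (-(1 / 7) * m) / 4 with ha
  have ha0 : 0 < a := by positivity
  have e2 : Real.exp (-2) ≤ 1 / 4 := by
    rw [Real.exp_neg, inv_le_comm₀ (Real.exp_pos _) (by norm_num)]
    have h := Real.add_one_le_exp 1
    have : Real.exp 2 = Real.exp 1 * Real.exp 1 := by rw [← Real.exp_add]; norm_num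
    rw [this]; norm_num at h ⊢; nlinarith
  have small : ∀ y : ℝ, y ≤ -(1 / 7) * m - 2 → Real.exp y ≤ a := by
    intro y hy
    calc Real.exp y ≤ Real.exp (-(1/7) * m + -2) := Real.exp_le_exp.2 (by linarith)
      _ = Real.exp (-(1/7) * m) * Real.exp (-2) := Real.exp_add _ _
      _ ≤ Real.exp (-(1/7) * m) * (1 / 4) := by gcongr
      _ = a := by rw [ha]; ring
  have b0 : P B0 ≤ ENNReal.ofReal a :=
    h0.trans (ENNReal.ofReal_le_ofReal (small _ (by linarith)))
  have b1 : P (⋃ u ∈ N 0, B1 u) ≤ ENNReal.ofReal a := by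
    calc _ ≤ ∑ u ∈ N 0, P (B1 u) := measure_biUnion_finset_le _ _
      _ ≤ ∑ u ∈ N 0, ENNReal.ofReal (Real.exp (-(m : ℝ))) := Finset.sum_le_sum fun u _ => h1 u
      _ = ENNReal.ofReal ((N 0).card * Real.exp (-(m:ℝ))) := by
        rw [Finset.sum_const, nsmul_eq_mul, ENNReal.ofReal_mul (by positivity), ENNReal.ofReal_natCast]
      _ ≤ ENNReal.ofReal a := by
        apply ENNReal.ofReal_le_ofReal
        calc _ ≤ Real.exp (((0:ℕ) + 3) * m / 7) * Real.exp (-(m:ℝ)) := by gcongr; exact hN 0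
          _ = Real.exp (((0:ℕ) + 3) * m / 7 + -(m:ℝ)) := (Real.exp_add _ _).symm
          _ ≤ a := small _ (by push_cast; linarith)
  have b2 : ∀ i, P (⋃ u ∈ N i, ⋃ v ∈ N (i + 1), B2 i u v) ≤ ENNReal.ofReal (a / 2 / 2 ^ i) := by
    intro i
    set t : ℝ := Real.exp (-((16 * ((i : ℝ) + 1) ^ 2) / 4 - 1 / 2) * m) with ht
    calc _ ≤ ∑ u ∈ N i, P (⋃ v ∈ N (i + 1), B2 i u v) := measure_biUnion_finset_le _ _
      _ ≤ ∑ u ∈ N i, ∑ v ∈ N (i + 1), P (B2 i u v) :=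
        Finset.sum_le_sum fun u _ => measure_biUnion_finset_le _ _
      _ ≤ ∑ u ∈ N i, ∑ v ∈ N (i + 1), ENNReal.ofReal t :=
        Finset.sum_le_sum fun u _ => Finset.sum_le_sum fun v _ => h2 i u v
      _ = ENNReal.ofReal ((N i).card * ((N (i + 1)).card * t)) := by
        simp only [Finset.sum_const, nsmul_eq_mul]
        rw [ENNReal.ofReal_mul (by positivity), ENNReal.ofReal_natCast,
          ENNReal.ofReal_mul (by positivity), ENNReal.ofReal_natCast]
      _ ≤ ENNReal.ofReal (a / 2 / 2 ^ i) := by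
        apply ENNReal.ofReal_le_ofReal
        have hi : (0:ℝ) ≤ i := Nat.cast_nonneg i
        calc _ ≤ Real.exp ((i + 3) * m / 7) * (Real.exp (((i + 1 : ℕ) + 3) * m / 7) * t) := by
              gcongr
              · exact hN i
              · exact hN (i + 1)
          _ = Real.exp ((i + 3) * m / 7 + (((i + 1 : ℕ) + 3) * m / 7 +
                -((16 * ((i : ℝ) + 1) ^ 2) / 4 - 1 / 2) * m)) := by
              rw [ht, ← Real.exp_add, ← Real.exp_add]
          _ ≤ Real.exp ((-(1/7) * m - 2) + (i + 1 : ℕ) * (-1)) := by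
              apply Real.exp_le_exp.2
              push_cast
              nlinarith [mul_nonneg hi (by linarith : (0:ℝ) ≤ m - 7), mul_nonneg (mul_nonneg hi hi) (by linarith : (0:ℝ) ≤ m)]
          _ = Real.exp (-(1/7) * m - 2) * Real.exp (-1) ^ (i + 1) := by
              rw [Real.exp_add, Real.exp_nat_mul]
          _ ≤ a * (1 / 2) ^ (i + 1) := by
              have := small _ le_rfl
              have : Real.exp (-1) ≤ 1 / 2 := by
                rw [Real.exp_neg, inv_le_comm₀ (Real.exp_pos _) (by norm_num)]
                have h := Real.add_one_le_exp 1
                norm_num at h ⊢; linarith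
              gcongr
          _ = a / 2 / 2 ^ i := by
              rw [_root_.one_div_pow, pow_succ]; field_simp
  have b3 : P (⋃ i, ⋃ u ∈ N i, ⋃ v ∈ N (i + 1), B2 i u v) ≤ ENNReal.ofReal a := by
    calc _ ≤ ∑' i, P (⋃ u ∈ N i, ⋃ v ∈ N (i + 1), B2 i u v) := measure_iUnion_le _
      _ ≤ ∑' i : ℕ, ENNReal.ofReal (a / 2 / 2 ^ i) := ENNReal.tsum_le_tsum b2
      _ = ENNReal.ofReal (∑' i : ℕ, a / 2 / 2 ^ i) :=
        (ENNReal.ofReal_tsum_of_nonneg (fun i => by positivity) (summable_geometric_two' a)).symm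
      _ = ENNReal.ofReal a := by rw [tsum_geometric_two']
  calc _ ≤ P B0 + P (⋃ u ∈ N 0, B1 u) + P (⋃ i, ⋃ u ∈ N i, ⋃ v ∈ N (i + 1), B2 i u v) :=
        (measure_union_le _ _).trans (by gcongr; exact measure_union_le _ _)
    _ ≤ ENNReal.ofReal a + ENNReal.ofReal a + ENNReal.ofReal a := by gcongr
    _ = ENNReal.ofReal (a + a + a) := by
      rw [ENNReal.ofReal_add (by positivity) ha0.le, ENNReal.ofReal_add ha0.le ha0.le]
    _ ≤ _ := ENNReal.ofReal_le_ofReal (by linarith)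

lemma net_card (k m i : ℕ) (L r δ c : ℝ) (hL : 0 < L) (hr : 0 < r) (hδ : 0 < δ)
    (hR : 1 ≤ Real.log (L * r / δ)) (hm : (m : ℝ) ≥ 7 * (k : ℝ) * Real.log (L * r / δ))
    (hc : c ≤ (1 + 2 * r / (δ / (L * 2 ^ i))) ^ k) : c ≤ Real.exp ((i + 3) * m / 7) := by
  refine hc.trans ?_
  set l := Real.log (L * r / δ) with hl
  have hRe : L * r / δ = Real.exp l := by rw [hl, Real.exp_log (by positivity)]
  have e1 : 2 * r / (δ / (L * 2 ^ i)) = 2 * Real.exp l * 2 ^ i := by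
    rw [← hRe]; field_simp
  have h1 := Real.add_one_le_exp 1
  norm_num at h1
  have h2 : (2 : ℝ) ^ i ≤ Real.exp i := by
    calc (2:ℝ) ^ i ≤ Real.exp 1 ^ i := by gcongr
      _ = _ := by rw [← Real.exp_nat_mul]; simp
  have h3 : (3 : ℝ) ≤ Real.exp 2 := by have := Real.add_one_le_exp 2; linarith
  have h4 : (1 : ℝ) ≤ Real.exp l * 2 ^ i := by
    have : (1:ℝ) ≤ 2 ^ i := one_le_pow₀ (by norm_num)
    have : 1 ≤ Real.exp l := Real.one_le_exp (by linarith)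
    nlinarith
  have h5 : 1 + 2 * r / (δ / (L * 2 ^ i)) ≤ Real.exp (2 + l + i) := by
    rw [e1, Real.exp_add, Real.exp_add]
    calc 1 + 2 * Real.exp l * 2 ^ i ≤ 3 * Real.exp l * 2 ^ i := by linarith
      _ ≤ _ := by gcongr
  calc _ ≤ Real.exp (2 + l + i) ^ k := by gcongr
    _ = Real.exp (k * (2 + l + i)) := by rw [← Real.exp_nat_mul]
    _ ≤ _ := by
      apply Real.exp_le_exp.2
      have hk : (0:ℝ) ≤ k := Nat.cast_nonneg k
      have hi : (0:ℝ) ≤ i := Nat.cast_nonneg i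
      have h6 : 2 + l + i ≤ (i + 3) * l := by nlinarith
      have h7 : k * (2 + l + i) ≤ k * ((i + 3) * l) := by gcongr
      have h8 : ((i:ℝ) + 3) * (7 * k * l) ≤ (i + 3) * m := by gcongr
      linarith

/-- Theorem 1 (recovery guarantee for amplitude-based loss minimization): there exist
universal constants `C, c, C' > 0` such that for any `L`-Lipschitz
`G : B₂ᵏ(r) → ℝⁿ`, any `x ∈ ℝⁿ`, any `δ > 0`, `τ > 0`, a random matrix `A ∈ ℝ^{m×n}`
with i.i.d. `N(0,1)` entries, measurements `y = |Ax| + η`, `p` a closest point of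
`Range(G)` to `x`, and `q ∈ Range(G)` minimizing the amplitude loss
`‖y − |A·|‖₂²` over `Range(G)` to within additive `τ`: if `m ≥ C k log(Lr/δ)`, then
with probability at least `1 − e^{−c m}`,
`min{‖q − x‖₂, ‖q + x‖₂} ≤ C'(‖p − x‖₂ + (‖η‖₂ + √τ)/√m + δ)`. -/
theorem stmt_0 :
    ∃ C c C' : ℝ, 0 < C ∧ 0 < c ∧ 0 < C' ∧
      ∀ (k n m : ℕ) (L r δ τ : ℝ), 0 < L → 0 < r → 0 < δ → 0 < τ →
      ∀ G : (Fin k → ℝ) → Fin n → ℝ,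
        (∀ z₁ z₂ : Fin k → ℝ, l2norm z₁ ≤ r → l2norm z₂ ≤ r →
          l2norm (G z₁ - G z₂) ≤ L * l2norm (z₁ - z₂)) →
      ∀ (x p : Fin n → ℝ) (η : Fin m → ℝ),
        InRange G r p →
        (∀ w, InRange G r w → l2norm (p - x) ≤ l2norm (w - x)) →
      ∀ (Ω : Type) [MeasurableSpace Ω] (P : Measure Ω) [IsProbabilityMeasure P]
        (A : Ω → Fin m → Fin n → ℝ), Measurable A → IIDStdGaussian P m n A →
      ∀ q : Ω → Fin n → ℝ,
        (∀ ω, InRange G r (q ω)) →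
        (∀ ω w, InRange G r w →
          (l2norm fun i => (|A ω i ⬝ᵥ x| + η i) - |A ω i ⬝ᵥ q ω|) ^ 2 ≤
            (l2norm fun i => (|A ω i ⬝ᵥ x| + η i) - |A ω i ⬝ᵥ w|) ^ 2 + τ) →
      (m : ℝ) ≥ C * (k : ℝ) * Real.log (L * r / δ) →
      P {ω | min (l2norm (q ω - x)) (l2norm (q ω + x)) ≤
              C' * (l2norm (p - x) + (l2norm η + Real.sqrt τ) / Real.sqrt m + δ)} ≥
        ENNReal.ofReal (1 - Real.exp (-c * m)) := by
  refine ⟨7, 1 / 7, 321, by norm_num, by norm_num, by norm_num, ?_⟩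
  intro k n m L r δ τ hL hr hδ hτ G hG x p η hp hpmin Ω _ P _ A hA hIID q hq hopt hm
  have triv : (∀ ω, min (l2norm (q ω - x)) (l2norm (q ω + x)) ≤
      321 * (l2norm (p - x) + (l2norm η + Real.sqrt τ) / Real.sqrt m + δ)) →
      P {ω | min (l2norm (q ω - x)) (l2norm (q ω + x)) ≤
              321 * (l2norm (p - x) + (l2norm η + Real.sqrt τ) / Real.sqrt m + δ)} ≥
        ENNReal.ofReal (1 - Real.exp (-(1 / 7) * m)) := by
    intro h
    have : {ω | min (l2norm (q ω - x)) (l2norm (q ω + x)) ≤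
              321 * (l2norm (p - x) + (l2norm η + Real.sqrt τ) / Real.sqrt m + δ)} = Set.univ :=
      Set.eq_univ_of_forall h
    rw [this, measure_univ]
    apply ENNReal.ofReal_le_one.2
    have := Real.exp_pos (-(1 / 7) * (m:ℝ))
    linarith
  have hrest : 0 ≤ (l2norm η + Real.sqrt τ) / Real.sqrt m := by
    have := l2norm_nonneg η
    positivity
  have hpx := l2norm_nonneg (p - x)
  have triv2 : (∀ ω, l2norm (q ω - p) ≤ 321 * δ) → ∀ ω, min (l2norm (q ω - x)) (l2norm (q ω + x)) ≤
      321 * (l2norm (p - x) + (l2norm η + Real.sqrt τ) / Real.sqrt m + δ) := by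
    intro h ω
    refine (min_le_left _ _).trans ?_
    have := l2norm_tri (q ω) p x
    have := h ω
    linarith
  obtain ⟨zp, hzp, hGp⟩ := hp
  rcases Nat.eq_zero_or_pos k with hk | hk
  · subst hk
    apply triv (triv2 _)
    intro ω
    obtain ⟨z, hz, hGz⟩ := hq ω
    rw [← hGz, ← hGp, Subsingleton.elim z zp]
    simp [l2norm]
    positivity
  rcases lt_or_ge (Real.log (L * r / δ)) 1 with hR | hR
  · apply triv (triv2 _)
    intro ω
    obtain ⟨z, hz, hGz⟩ := hq ω
    have h1 := hG z zp hz hzp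
    have h2 : l2norm (z - zp) ≤ 2 * r := by
      have := l2norm_tri z 0 zp
      rw [l2norm_sub_comm 0 zp] at this
      simp only [sub_zero] at this
      linarith
    have h3 : L * r / δ < Real.exp 1 := (Real.log_lt_iff_lt_exp (by positivity)).1 hR
    rw [div_lt_iff₀ hδ] at h3
    have h4 := Real.exp_one_lt_d9
    rw [← hGz, ← hGp]
    have h5 : L * l2norm (z - zp) ≤ L * (2 * r) := by gcongr
    nlinarith
  have hk1 : (1:ℝ) ≤ k := by exact_mod_cast hk
  have hm7 : 7 ≤ (m:ℝ) := by nlinarith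
  have hm0 : 0 < m := by
    have : (0:ℝ) < m := by linarith
    exact_mod_cast this
  have hP : ∀ S : Set (Fin m → Fin n → ℝ), P {ω | A ω ∈ S} ≤
      (Measure.pi fun _ : Fin m => gam n) S := by
    intro S
    have h : P.map A = Measure.pi fun _ : Fin m => gam n := hIID
    rw [← h]
    exact Measure.le_map_apply hA.aemeasurable S
  choose N hN1 hN2 hN3 using fun i : ℕ =>
    exists_net (k := k) r (δ / (L * 2 ^ i)) hr (by positivity)
  obtain ⟨B0, hB0⟩ : ∃ B : Set Ω, B = {ω | A ω ∈ {M : Fin m → Fin n → ℝ |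
      16 * m * l2norm (x - p) ^ 2 < ∑ j, (M j ⬝ᵥ (x - p)) ^ 2}} := ⟨_, rfl⟩
  obtain ⟨B1, hB1⟩ : ∃ B : (Fin k → ℝ) → Set Ω, ∀ u, B u = {ω | A ω ∈ {M : Fin m → Fin n → ℝ |
      ∑ j, (min |M j ⬝ᵥ (x - G u)| |M j ⬝ᵥ (x + G u)|) ^ 2 <
      1 / 100 * m * (min (l2norm (x - G u)) (l2norm (x + G u))) ^ 2}} := ⟨_, fun _ => rfl⟩
  obtain ⟨B2, hB2⟩ : ∃ B : ℕ → (Fin k → ℝ) → (Fin k → ℝ) → Set Ω, ∀ i u v, B i u v =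
      {ω | A ω ∈ {M : Fin m → Fin n → ℝ | 16 * ((i:ℝ) + 1) ^ 2 * m * l2norm (G u - G v) ^ 2 <
      ∑ j, (M j ⬝ᵥ (G u - G v)) ^ 2}} := ⟨_, fun _ _ _ => rfl⟩
  have hcard : ∀ i, ((N i).card : ℝ) ≤ Real.exp ((i + 3) * m / 7) :=
    fun i => net_card k m i L r δ _ hL hr hδ hR hm (hN3 i)
  have hp0 : P B0 ≤ ENNReal.ofReal (Real.exp (-(16 / 4 - 1 / 2) * m)) := by
    rw [hB0]; exact (hP _).trans (upper_tail (x - p) 16)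
  have hp1 : ∀ u, P (B1 u) ≤ ENNReal.ofReal (Real.exp (-(m : ℝ))) := by
    intro u
    rw [hB1]; exact (hP _).trans (lower_tail (x - G u) (x + G u))
  have hp2 : ∀ i u v, P (B2 i u v) ≤
      ENNReal.ofReal (Real.exp (-((16 * ((i : ℝ) + 1) ^ 2) / 4 - 1 / 2) * m)) := by
    intro i u v
    rw [hB2]; exact (hP _).trans (upper_tail (G u - G v) (16 * ((i : ℝ) + 1) ^ 2))
  have hub := union_bound P m k hm7 N hcard B0 B1 B2 hp0 hp1 hp2
  obtain ⟨Bad, hBad⟩ : ∃ B, B = B0 ∪ (⋃ u ∈ N 0, B1 u) ∪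
    ⋃ i, ⋃ u ∈ N i, ⋃ v ∈ N (i + 1), B2 i u v := ⟨_, rfl⟩
  rw [← hBad] at hub
  have hcov : ∀ ω, ω ∉ Bad → min (l2norm (q ω - x)) (l2norm (q ω + x)) ≤
      321 * (l2norm (p - x) + (l2norm η + Real.sqrt τ) / Real.sqrt m + δ) := by
    intro ω hω
    simp only [hBad, hB0, hB1, hB2, Set.mem_union, Set.mem_iUnion, Set.mem_ofPred_eq, not_or, not_exists, not_lt,
      exists_prop, not_and] at hω
    obtain ⟨⟨g0, g1⟩, g2⟩ := hω
    obtain ⟨z, hz, hGz⟩ := hq ω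
    choose y hyN hyz using fun i => hN2 i z hz
    have up : ∀ (v : Fin n → ℝ) (s : ℝ), 0 ≤ s → ∑ j, (A ω j ⬝ᵥ v) ^ 2 ≤ s ^ 2 * m * l2norm v ^ 2 →
        l2norm (av (A ω) v) ≤ s * √m * l2norm v := by
      intro v s hs h
      apply Real.sqrt_le_iff.2
      refine ⟨by have := l2norm_nonneg v; positivity, h.trans (le_of_eq ?_)⟩
      rw [mul_pow, mul_pow, Real.sq_sqrt (by positivity)]
    apply deterministic hm0 (A ω) δ τ hτ (fun i => G (y i)) (q ω) x p η
    · intro i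
      rw [← hGz, l2norm_sub_comm]
      refine (hG z (y i) hz (hN1 i _ (hyN i))).trans ?_
      calc L * l2norm (z - y i) ≤ L * (δ / (L * 2 ^ i)) := by gcongr; exact hyz i
        _ = δ / 2 ^ i := by field_simp
    · intro i
      apply up _ _ (by positivity)
      refine (g2 i (y i) (hyN i) (y (i+1)) (hyN (i+1))).trans (le_of_eq ?_)
      ring
    · rw [l2norm_sub_comm p x]
      apply up _ _ (by positivity)
      refine g0.trans (le_of_eq ?_)
      ring
    · apply Real.le_sqrt_of_sq_le
      refine le_trans (le_of_eq ?_) (g1 (y 0) (hyN 0))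
      rw [mul_pow, div_pow, Real.sq_sqrt (by positivity)]
      ring
    · exact hopt ω p ⟨zp, hzp, hGp⟩
  set S := {ω | min (l2norm (q ω - x)) (l2norm (q ω + x)) ≤
      321 * (l2norm (p - x) + (l2norm η + Real.sqrt τ) / Real.sqrt m + δ)}
  have hSB : Set.univ ⊆ S ∪ Bad := by
    intro ω _
    by_cases h : ω ∈ Bad
    · exact Or.inr h
    · exact Or.inl (hcov ω h)
  have h1 : (1 : ENNReal) ≤ P S + ENNReal.ofReal (Real.exp (-(1 / 7) * m)) := by
    calc (1 : ENNReal) = P Set.univ := measure_univ.symm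
      _ ≤ P (S ∪ Bad) := measure_mono hSB
      _ ≤ P S + P Bad := measure_union_le _ _
      _ ≤ _ := by gcongr
  rw [ge_iff_le, ENNReal.ofReal_sub _ (Real.exp_pos _).le, ENNReal.ofReal_one]
  exact tsub_le_iff_right.2 h1
end

section
/- Let x ∈ ℝ^n be nonzero, let A ∈ ℝ^{m×n} have i.i.d. standard normal entries with rows a_1ᵀ,…,a_mᵀ, let y_i = |⟨a_i, x⟩| + η_i, and let λ = √(π/2)·(1/m)∑_{i=1}^m y_i. For every c ∈ (0,1) there exist constants c₀ > 0 and c' > 0 such that if the noise satisfies ‖η‖₂/√m ≤ c₀‖x‖₂, then with probability at least 1 − e^{−c' m}: (1 − c)‖x‖₂ < λ < (1 + c)‖x‖₂. -/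
open MeasureTheory ProbabilityTheory Matrix

/-- `λ = √(π/2)·(1/m)∑_i y_i` with `y_i = |⟨a_i, x⟩| + η_i`. -/
noncomputable def lamb {m n : ℕ} (a : Fin m → Fin n → ℝ) (x : Fin n → ℝ)
    (η : Fin m → ℝ) : ℝ :=
  Real.sqrt (Real.pi / 2) * ((1 / (m : ℝ)) * ∑ i, (|a i ⬝ᵥ x| + η i))

lemma gauss_lin {n : ℕ} (u : Fin n → ℝ) (hu : ∑ j, u j ^ 2 = 1) :
    Measure.map (fun a : Fin n → ℝ => a ⬝ᵥ u) (Measure.pi fun _ : Fin n => gaussianReal 0 1)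
      = gaussianReal 0 1 := by
  have hm : Measurable (fun a : Fin n → ℝ => a ⬝ᵥ u) := by
    unfold dotProduct; fun_prop
  have : IsProbabilityMeasure (Measure.map (fun a : Fin n → ℝ => a ⬝ᵥ u)
      (Measure.pi fun _ : Fin n => gaussianReal 0 1)) :=
    Measure.isProbabilityMeasure_map hm.aemeasurable
  apply Measure.ext_of_charFun
  ext t
  rw [charFun_apply_real, integral_map hm.aemeasurable (by fun_prop)]
  have h1 : ∀ a : Fin n → ℝ, Complex.exp (t * ((a ⬝ᵥ u : ℝ) : ℂ) * Complex.I)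
      = ∏ j, Complex.exp (((t * u j : ℝ) : ℂ) * (a j : ℂ) * Complex.I) := by
    intro a
    rw [← Complex.exp_sum]
    congr 1
    simp only [dotProduct]
    push_cast
    rw [Finset.mul_sum, Finset.sum_mul]
    refine Finset.sum_congr rfl fun j _ => ?_
    ring
  simp_rw [h1]
  rw [integral_fintype_prod_eq_prod
    (f := fun j (y : ℝ) => Complex.exp (((t * u j : ℝ) : ℂ) * (y : ℂ) * Complex.I))]
  simp_rw [← charFun_apply_real, charFun_gaussianReal]
  rw [← Complex.exp_sum]
  congr 1
  have : ((∑ j, u j ^ 2 : ℝ) : ℂ) = 1 := by rw [hu]; simp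
  push_cast at this
  simp only [Complex.ofReal_mul, Complex.ofReal_zero, mul_zero, zero_mul, zero_sub, NNReal.coe_one,
    Complex.ofReal_one, one_mul, mul_pow]
  rw [Finset.sum_neg_distrib, ← Finset.sum_div, ← Finset.mul_sum, this, mul_one]

lemma gauss_abs : ∫ g, |g| ∂(gaussianReal 0 1) = √(2 / Real.pi) := by
  rw [integral_gaussianReal_eq_integral_smul (by norm_num)]
  have h : ∀ y : ℝ, gaussianPDFReal 0 1 y • |y| = (√(2 * Real.pi))⁻¹ *
      ((fun z : ℝ => z ^ (1:ℝ) * Real.exp (-(1/2) * z ^ (2:ℝ))) |y|) := by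
    intro y
    simp [gaussianPDFReal]
    ring_nf
  rw [integral_congr_ae (Filter.Eventually.of_forall h), integral_const_mul,
    integral_comp_abs (f := fun z : ℝ => z ^ (1:ℝ) * Real.exp (-(1/2) * z ^ (2:ℝ))),
    integral_rpow_mul_exp_neg_mul_rpow (by norm_num) (by norm_num) (by norm_num)]
  have e : ((1/2 : ℝ) ^ (-(1 + 1) / 2 : ℝ)) = 2 := by
    rw [show (-(1+1)/2 : ℝ) = -1 by norm_num, Real.rpow_neg_one]; norm_num
  rw [e]
  norm_num
  have : √2 * √2 = 2 := Real.mul_self_sqrt (by norm_num)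
  have h2 : √2 ≠ 0 := by positivity
  have h3 : √Real.pi ≠ 0 := by positivity
  field_simp
  nlinarith

lemma chernoff_s6 (μ : Measure ℝ) [IsProbabilityMeasure μ] (Z : ℝ → ℝ) (hZ : Measurable Z)
    (hint : ∀ s : ℝ, Integrable (fun g => Real.exp (s * Z g)) μ) (t : ℝ) (ht : ∫ g, Z g ∂μ < t) :
    ∃ r : ℝ, 0 < r ∧ r < 1 ∧ ∀ m : ℕ,
      (Measure.pi fun _ : Fin m => μ).real {v | m * t ≤ ∑ i, Z (v i)} ≤ r ^ m := by
  have hset : integrableExpSet Z μ = Set.univ := by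
    ext s; simpa [integrableExpSet] using hint s
  have hd : HasDerivAt (mgf Z μ) (∫ g, Z g ∂μ) 0 := by
    have := hasDerivAt_mgf (X := Z) (μ := μ) (t := 0) (by rw [hset]; simp)
    simpa using this
  have hd2 : HasDerivAt (fun s => mgf Z μ s * Real.exp (-s * t)) (∫ g, Z g ∂μ - t) 0 := by
    have h1 : HasDerivAt (fun s : ℝ => Real.exp (-s * t)) (-t) 0 := by
      have := (((hasDerivAt_id (0:ℝ)).neg).mul_const t).exp
      simpa using this
    have := hd.mul h1
    convert! this using 1
    simp [sub_eq_add_neg]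
  obtain ⟨s, hs0, hs1⟩ : ∃ s : ℝ, 0 < s ∧ mgf Z μ s * Real.exp (-s * t) < 1 := by
    have hlim := (hasDerivAt_iff_tendsto_slope.1 hd2)
    have hneg : ∀ᶠ s in nhdsWithin (0:ℝ) {0}ᶜ,
        slope (fun s => mgf Z μ s * Real.exp (-s * t)) 0 s < 0 :=
      hlim.eventually_lt_const (by linarith)
    have h2 : nhdsWithin (0:ℝ) (Set.Ioi 0) ≤ nhdsWithin (0:ℝ) {0}ᶜ :=
      nhdsWithin_mono _ (fun s hs => ne_of_gt hs)
    obtain ⟨s, hs, hs'⟩ := ((hneg.filter_mono h2).and self_mem_nhdsWithin).exists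
    refine ⟨s, hs', ?_⟩
    have hs' : 0 < s := hs'
    rw [slope_def_field] at hs
    simp at hs
    rw [div_neg_iff] at hs
    rcases hs with h | h
    · linarith [h.2]
    · have := h.1; simp at this ⊢; linarith
  have hpos : 0 < mgf Z μ s := mgf_pos (hint s)
  refine ⟨_, by positivity, hs1, fun m => ?_⟩
  have hprod : ∀ v : Fin m → ℝ, Real.exp (s * ∑ i, Z (v i)) = ∏ i, Real.exp (s * Z (v i)) := by
    intro v; rw [Finset.mul_sum, Real.exp_sum]
  have hI : Integrable (fun v : Fin m → ℝ => Real.exp (s * ∑ i, Z (v i)))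
      (Measure.pi fun _ : Fin m => μ) := by
    simp_rw [hprod]
    exact Integrable.fintype_prod (f := fun _ g => Real.exp (s * Z g)) fun i => hint s
  refine (measure_ge_le_exp_mul_mgf (X := fun v : Fin m → ℝ => ∑ i, Z (v i)) (m * t) hs0.le hI).trans
    (le_of_eq ?_)
  rw [mgf]
  simp_rw [hprod]
  rw [integral_fintype_prod_eq_pow (fun g => Real.exp (s * Z g)), Fintype.card_fin, mul_pow, mgf,
    ← Real.exp_nat_mul, mul_comm]
  congr 2
  ring

lemma band_meas {m : ℕ} (K a b : ℝ) :
    MeasurableSet {v : Fin m → ℝ | a < ∑ i, K * |v i| ∧ ∑ i, K * |v i| < b} := by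
  have h : Measurable fun v : Fin m → ℝ => ∑ i, K * |v i| := by fun_prop
  exact h measurableSet_Ioo

lemma core (δ : ℝ) (hδ : 0 < δ) : ∃ κ : ℝ, 0 < κ ∧ ∀ m : ℕ,
    (Measure.pi fun _ : Fin m => gaussianReal 0 1).real
      {v | (1 - δ) * m < ∑ i, √(Real.pi / 2) * |v i| ∧
        ∑ i, √(Real.pi / 2) * |v i| < (1 + δ) * m}ᶜ ≤ Real.exp (-κ * m) := by
  set K := √(Real.pi / 2) with hK
  have hK0 : 0 < K := by positivity
  have hKE : ∫ g, K * |g| ∂(gaussianReal 0 1) = 1 := by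
    rw [integral_const_mul, gauss_abs, hK, ← Real.sqrt_mul (by positivity)]
    rw [show Real.pi / 2 * (2 / Real.pi) = 1 by field_simp]
    simp
  have hint : ∀ s : ℝ, Integrable (fun g => Real.exp (s * |g|)) (gaussianReal 0 1) := fun s =>
    integrable_exp_mul_abs (X := fun g => g) (integrable_exp_mul_gaussianReal s)
      (integrable_exp_mul_gaussianReal (-s))
  obtain ⟨r₁, h10, h11, H1⟩ := chernoff_s6 (gaussianReal 0 1) (fun g => K * |g|) (by fun_prop)
    (fun s => by simpa [mul_assoc] using hint (s * K)) (1 + δ) (by rw [hKE]; linarith)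
  obtain ⟨r₂, h20, h21, H2⟩ := chernoff_s6 (gaussianReal 0 1) (fun g => -(K * |g|)) (by fun_prop)
    (fun s => by simpa [mul_assoc] using hint (-s * K)) (-(1 - δ))
    (by rw [integral_neg, hKE]; linarith)
  -- one-coordinate positive probability
  set S : Set ℝ := {g | 1 - δ < K * |g| ∧ K * |g| < 1 + δ} with hS
  have hSo : IsOpen S := by
    have h : Continuous fun g : ℝ => K * |g| := by fun_prop
    exact isOpen_Ioo.preimage h
  have hSne : S.Nonempty := by
    refine ⟨K⁻¹, ?_⟩
    have : K * |K⁻¹| = 1 := by rw [abs_of_pos (by positivity)]; field_simp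
    simp only [hS, Set.mem_ofPred_eq, this]
    constructor <;> linarith
  set p := (gaussianReal 0 1).real S with hp
  have hp0 : 0 < p := by
    rw [hp, measureReal_def, ENNReal.toReal_pos_iff]
    refine ⟨?_, measure_lt_top _ _⟩
    rw [pos_iff_ne_zero]
    intro h0
    exact (hSo.measure_pos volume hSne).ne' (gaussianReal_absolutelyContinuous' 0 one_ne_zero h0)
  have hp1 : p ≤ 1 := measureReal_le_one
  set r := max r₁ r₂ with hr
  have hr0 : 0 < r := lt_max_of_lt_left h10
  have hr1 : r < 1 := max_lt h11 h21
  set q := √r with hq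
  have hq0 : 0 < q := by positivity
  have hq1 : q < 1 := by rw [hq, Real.sqrt_lt' one_pos]; simpa using hr1
  have hqq : r = q * q := (Real.mul_self_sqrt hr0.le).symm
  obtain ⟨M, hM⟩ := exists_pow_lt_of_lt_one (show (0:ℝ) < 1/2 by norm_num) hq1
  have hlog : 0 < -Real.log q := by linarith [Real.log_neg hq0 hq1]
  refine ⟨min (p ^ M / (M + 1)) (-Real.log q), lt_min (by positivity) hlog, fun m => ?_⟩
  set κ := min (p ^ M / (M + 1)) (-Real.log q) with hκ
  have hκ0 : 0 < κ := lt_min (by positivity) hlog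
  set G : Set (Fin m → ℝ) := {v | (1 - δ) * m < ∑ i, K * |v i| ∧ ∑ i, K * |v i| < (1 + δ) * m}
    with hG
  have hGm : MeasurableSet G := band_meas K _ _
  rcases Nat.eq_zero_or_pos m with h0 | hmpos
  · subst h0
    simpa using measureReal_le_one
  rcases le_or_gt M m with hm | hm
  · have hsub : Gᶜ ⊆ {v | (m:ℝ) * (1 + δ) ≤ ∑ i, K * |v i|} ∪
        {v | (m:ℝ) * (-(1 - δ)) ≤ ∑ i, -(K * |v i|)} := by
      intro v hv
      by_contra hcon
      simp only [Set.mem_union, Set.mem_ofPred_eq, not_or, not_le, Finset.sum_neg_distrib] at hcon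
      exact hv ⟨by linarith [hcon.2], by linarith [hcon.1]⟩
    have h1 : r₁ ^ m ≤ r ^ m := pow_le_pow_left₀ h10.le (le_max_left _ _) m
    have h2 : r₂ ^ m ≤ r ^ m := pow_le_pow_left₀ h20.le (le_max_right _ _) m
    have h3 : q ^ m ≤ q ^ M := pow_le_pow_of_le_one hq0.le hq1.le hm
    have h4 : q ^ m ≤ Real.exp (-κ * m) := by
      rw [← Real.exp_log hq0, ← Real.exp_nat_mul]
      apply Real.exp_le_exp.2
      have : κ ≤ -Real.log q := min_le_right _ _
      rw [mul_comm]
      exact mul_le_mul_of_nonneg_right (by linarith) (Nat.cast_nonneg m)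
    have h5 : r ^ m = q ^ m * q ^ m := by rw [hqq, mul_pow]
    have h6 : 0 < q ^ m := by positivity
    calc _ ≤ _ := measureReal_mono hsub
      _ ≤ _ := measureReal_union_le _ _
      _ ≤ r₁ ^ m + r₂ ^ m := add_le_add (H1 m) (H2 m)
      _ ≤ q ^ m := by nlinarith
      _ ≤ _ := h4
  · have hsub : Set.pi Set.univ (fun _ : Fin m => S) ⊆ G := by
      intro v hv
      have : Nonempty (Fin m) := ⟨⟨0, hmpos⟩⟩
      have e1 : ∑ _i : Fin m, (1 - δ) < ∑ i, K * |v i| :=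
        Finset.sum_lt_sum_of_nonempty Finset.univ_nonempty (fun i _ => (hv i trivial).1)
      have e2 : ∑ i, K * |v i| < ∑ _i : Fin m, (1 + δ) :=
        Finset.sum_lt_sum_of_nonempty Finset.univ_nonempty (fun i _ => (hv i trivial).2)
      simp only [Finset.sum_const, Finset.card_univ, Fintype.card_fin, nsmul_eq_mul] at e1 e2
      exact ⟨by linarith, by linarith⟩
    have hpm : p ^ m ≤ (Measure.pi fun _ : Fin m => gaussianReal 0 1).real G := by
      refine le_trans (le_of_eq ?_) (measureReal_mono hsub)
      rw [measureReal_def, Measure.pi_pi]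
      simp [hp, measureReal_def]
    rw [probReal_compl_eq_one_sub hGm]
    have h1 : p ^ M ≤ p ^ m := pow_le_pow_of_le_one hp0.le hp1 hm.le
    have h2 := Real.add_one_le_exp (-κ * m)
    have h3 : κ * m ≤ p ^ M := by
      have a1 : κ ≤ p ^ M / (M + 1) := min_le_left _ _
      have a2 : (m:ℝ) ≤ M + 1 := by
        have : (m:ℝ) ≤ M := by exact_mod_cast hm.le
        linarith
      calc κ * m ≤ p ^ M / (M + 1) * (M + 1) := by gcongr
        _ = p ^ M := by field_simp
    linarith

/-- For nonzero `x ∈ ℝ^n`, a random matrix `A` with i.i.d. `N(0,1)` entries,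
`y_i = |⟨a_i,x⟩| + η_i` and `λ = √(π/2)·(1/m)∑ y_i`: for every `c ∈ (0,1)` there are
constants `c₀, c' > 0` such that if `‖η‖₂/√m ≤ c₀‖x‖₂`, then with probability at
least `1 − e^{−c' m}` one has `(1−c)‖x‖₂ < λ < (1+c)‖x‖₂`. -/
theorem stmt_6 (c : ℝ) (hc0 : 0 < c) (hc1 : c < 1) :
    ∃ c₀ c' : ℝ, 0 < c₀ ∧ 0 < c' ∧
      ∀ (m n : ℕ) (x : Fin n → ℝ), x ≠ 0 →
      ∀ η : Fin m → ℝ, l2norm η / Real.sqrt m ≤ c₀ * l2norm x →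
      ∀ (Ω : Type) [MeasurableSpace Ω] (P : Measure Ω) [IsProbabilityMeasure P]
        (A : Ω → Fin m → Fin n → ℝ), Measurable A → IIDStdGaussian P m n A →
        P {ω | (1 - c) * l2norm x < lamb (A ω) x η ∧
               lamb (A ω) x η < (1 + c) * l2norm x} ≥
          ENNReal.ofReal (1 - Real.exp (-c' * m)) := by
  obtain ⟨κ, hκ, H⟩ := core (c / 2) (by positivity)
  refine ⟨c / 4, κ, by positivity, hκ, ?_⟩
  intro m n x hx η hη Ω _ P _ A hA hlaw
  rcases Nat.eq_zero_or_pos m with h0 | hmpos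
  · subst h0; simp
  have hm : (0:ℝ) < m := by exact_mod_cast hmpos
  have hsq : 0 < ∑ j, x j ^ 2 := by
    obtain ⟨j, hj⟩ := Function.ne_iff.1 hx
    exact Finset.sum_pos' (fun i _ => sq_nonneg _) ⟨j, Finset.mem_univ _, by
      have : x j ≠ 0 := hj
      positivity⟩
  set L := l2norm x with hL
  have hL0 : 0 < L := Real.sqrt_pos.2 hsq
  have hL2 : L ^ 2 = ∑ j, x j ^ 2 := Real.sq_sqrt hsq.le
  set u : Fin n → ℝ := fun j => x j / L with hu
  have hu1 : ∑ j, u j ^ 2 = 1 := by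
    simp only [hu, div_pow]
    rw [← Finset.sum_div, ← hL2]
    field_simp
  have hxu : x = L • u := by
    ext j; simp only [hu, Pi.smul_apply, smul_eq_mul]; field_simp
  have hdm : Measurable (fun a : Fin n → ℝ => a ⬝ᵥ u) := by
    unfold dotProduct; fun_prop
  have hΦ : Measurable (fun (a : Fin m → Fin n → ℝ) (i : Fin m) => a i ⬝ᵥ u) := by
    unfold dotProduct; fun_prop
  set K := √(Real.pi / 2) with hK
  have hK0 : 0 < K := by positivity
  have hK2 : K < 2 := by
    rw [hK, Real.sqrt_lt' (by norm_num)]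
    linarith [Real.pi_lt_four]
  set G : Set (Fin m → ℝ) := {v | (1 - c / 2) * m < ∑ i, K * |v i| ∧
    ∑ i, K * |v i| < (1 + c / 2) * m} with hG
  have hGm : MeasurableSet G := band_meas K _ _
  have hmap : Measure.map (fun ω (i : Fin m) => A ω i ⬝ᵥ u) P
      = Measure.pi fun _ : Fin m => gaussianReal 0 1 := by
    have h1 : (fun ω (i : Fin m) => A ω i ⬝ᵥ u)
        = (fun (a : Fin m → Fin n → ℝ) (i : Fin m) => a i ⬝ᵥ u) ∘ A := rfl
    rw [h1, ← Measure.map_map hΦ hA, hlaw]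
    have : ∀ i : Fin m, SigmaFinite (Measure.map (fun a : Fin n → ℝ => a ⬝ᵥ u)
        (Measure.pi fun _ : Fin n => gaussianReal 0 1)) := by
      intro i; rw [gauss_lin u hu1]; infer_instance
    rw [Measure.pi_map_pi (f := fun (_ : Fin m) (a : Fin n → ℝ) => a ⬝ᵥ u)
      (fun _ => hdm.aemeasurable)]
    simp_rw [gauss_lin u hu1]
  -- noise
  have hnoise : |∑ i, η i| ≤ c / 4 * L * m := by
    have hsm : 0 < √(m:ℝ) := Real.sqrt_pos.2 hm
    rw [div_le_iff₀ hsm] at hη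
    have cs : (∑ i, η i) ^ 2 ≤ m * ∑ i, η i ^ 2 := by
      simpa using sq_sum_le_card_mul_sum_sq (s := Finset.univ) (f := η)
    have h2 : |∑ i, η i| ≤ √(m:ℝ) * l2norm η := by
      unfold l2norm
      rw [← Real.sqrt_mul hm.le]
      exact Real.abs_le_sqrt cs
    calc _ ≤ √(m:ℝ) * l2norm η := h2
      _ ≤ √(m:ℝ) * (c / 4 * L * √(m:ℝ)) := by gcongr
      _ = c / 4 * L * (√(m:ℝ) * √(m:ℝ)) := by ring
      _ = _ := by rw [Real.mul_self_sqrt hm.le]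
  have hKn : |K * ∑ i, η i| ≤ c / 2 * L * m := by
    rw [abs_mul, abs_of_pos hK0]
    calc K * |∑ i, η i| ≤ 2 * (c / 4 * L * m) := by gcongr
      _ = _ := by ring
  have hsub : (fun ω (i : Fin m) => A ω i ⬝ᵥ u) ⁻¹' G ⊆
      {ω | (1 - c) * L < lamb (A ω) x η ∧ lamb (A ω) x η < (1 + c) * L} := by
    intro ω hω
    obtain ⟨g1, g2⟩ : (1 - c / 2) * m < ∑ i, K * |A ω i ⬝ᵥ u| ∧
      ∑ i, K * |A ω i ⬝ᵥ u| < (1 + c / 2) * m := hω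
    have hl : lamb (A ω) x η = (L * ∑ i, K * |A ω i ⬝ᵥ u| + K * ∑ i, η i) / m := by
      unfold lamb
      rw [← hK, Finset.sum_add_distrib]
      have : ∀ i, |A ω i ⬝ᵥ x| = L * |A ω i ⬝ᵥ u| := by
        intro i
        conv_lhs => rw [hxu]
        rw [dotProduct_smul, smul_eq_mul, abs_mul, abs_of_pos hL0]
      simp_rw [this]
      rw [← Finset.mul_sum, ← Finset.mul_sum]
      field_simp
    have g1' := mul_lt_mul_of_pos_left g1 hL0
    have g2' := mul_lt_mul_of_pos_left g2 hL0
    have := abs_le.1 hKn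
    simp only [Set.mem_ofPred_eq]
    rw [hl, lt_div_iff₀ hm, div_lt_iff₀ hm]
    constructor <;> nlinarith [this.1, this.2]
  refine ge_iff_le.2 (le_trans ?_ (measure_mono hsub))
  have hmm : Measurable (fun ω (i : Fin m) => A ω i ⬝ᵥ u) := hΦ.comp hA
  rw [← Measure.map_apply hmm hGm, hmap]
  have hb := H m
  rw [← hG, probReal_compl_eq_one_sub hGm] at hb
  rw [← ofReal_measureReal]
  exact ENNReal.ofReal_le_ofReal (by linarith)
end

section
/- Let a ~ N(0, I_n) be a standard Gaussian vector in ℝ^n, let s ∈ ℝ^n be nonzero, let η ∈ ℝ, and let α₁, α₂ ∈ ℝ satisfy 1 + η/‖s‖₂ < α₁ < α₂. Set y = |⟨a, s⟩| + η and φ₁(t) = 1{α₁ − η/‖s‖₂ < |t| < α₂ − η/‖s‖₂}. Then E[ y · a aᵀ · 1{α₁‖s‖₂ < y < α₂‖s‖₂} ] = ‖s‖₂ (γ₁ I_n + β₁ s̄ s̄ᵀ) + η (γ̌₁ I_n + β̌₁ s̄ s̄ᵀ), where, for g ~ N(0,1): γ₁ = E[|g| φ₁(g)], β₁ = E[|g|³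 φ₁(g)] − γ₁, γ̌₁ = E[φ₁(g)], and β̌₁ = E[g² φ₁(g)] − γ̌₁. -/
open MeasureTheory ProbabilityTheory Matrix

/-- The standard Gaussian measure `N(0, I_n)` on `ℝ^n`. -/
noncomputable def piGauss (n : ℕ) : Measure (Fin n → ℝ) :=
  Measure.pi fun _ : Fin n => gaussianReal 0 1

/-- Expectation of `f(g)` for `g ~ N(0,1)`. -/
noncomputable def gExp (f : ℝ → ℝ) : ℝ := ∫ g, f g ∂(gaussianReal 0 1)

/-- The indicator `φ₁(t) = 1{b₁ < |t| < b₂}`. -/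
noncomputable def phiInd (b₁ b₂ t : ℝ) : ℝ := if b₁ < |t| ∧ |t| < b₂ then 1 else 0

lemma piGauss_gauss (n : ℕ) : HasGaussianLaw (fun a : Fin n → ℝ => a) (piGauss n) := by
  have h : iIndepFun (fun (i : Fin n) (a : Fin n → ℝ) => a i) (piGauss n) :=
    iIndepFun_pi (X := fun _ x => x) (fun i => aemeasurable_id)
  refine h.hasGaussianLaw (fun i => ?_)
  constructor
  have : (piGauss n).map (fun a : Fin n → ℝ => a i) = gaussianReal 0 1 :=
    (measurePreserving_eval (fun _ : Fin n => gaussianReal 0 1) i).map_eq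
  rw [this]; infer_instance

instance piGauss_prob (n : ℕ) : IsProbabilityMeasure (piGauss n) := by
  unfold piGauss; infer_instance

lemma piGauss_memLp (n : ℕ) (i : Fin n) : MemLp (fun a : Fin n → ℝ => a i) 2 (piGauss n) :=
  ((piGauss_gauss n).map (ContinuousLinearMap.proj (R := ℝ) (φ := fun _ : Fin n => ℝ) i)).memLp_two

lemma piGauss_map (n : ℕ) (i : Fin n) :
    (piGauss n).map (fun a : Fin n → ℝ => a i) = gaussianReal 0 1 :=
  (measurePreserving_eval (fun _ : Fin n => gaussianReal 0 1) i).map_eq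

lemma piGauss_mean (n : ℕ) (i : Fin n) : ∫ a, a i ∂(piGauss n) = 0 := by
  have := integral_map (μ := piGauss n) (φ := fun a : Fin n → ℝ => a i)
    (measurable_pi_apply i).aemeasurable (f := fun x : ℝ => x) (by fun_prop)
  rw [← this, piGauss_map]; simp

lemma piGauss_cov (n : ℕ) (i j : Fin n) :
    cov[fun a : Fin n → ℝ => a i, fun a => a j; piGauss n] = if i = j then 1 else 0 := by
  split_ifs with h
  · subst h
    rw [covariance_self (measurable_pi_apply i).aemeasurable]
    have := variance_map (μ := piGauss n) (X := fun x : ℝ => x) (Y := fun a : Fin n → ℝ => a i)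
      (by fun_prop) (measurable_pi_apply i).aemeasurable
    rw [piGauss_map] at this
    have h2 := variance_id_gaussianReal (μ := 0) (v := 1)
    simp only [Function.comp_def] at this
    rw [← this]
    exact h2
  · have hI : iIndepFun (fun (i : Fin n) (a : Fin n → ℝ) => a i) (piGauss n) :=
      iIndepFun_pi (X := fun _ x => x) (fun i => aemeasurable_id)
    exact (hI.indepFun h).covariance_eq_zero (piGauss_memLp n i) (piGauss_memLp n j)

lemma dot_memLp (n : ℕ) (u : Fin n → ℝ) : MemLp (fun a : Fin n → ℝ => a ⬝ᵥ u) 2 (piGauss n) := by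
  unfold dotProduct
  exact memLp_finsetSum _ (fun i _ => (piGauss_memLp n i).mul_const (u i))

lemma dot_cov (n : ℕ) (u : Fin n → ℝ) (j : Fin n) :
    cov[fun a : Fin n → ℝ => a ⬝ᵥ u, fun a => a j; piGauss n] = u j := by
  unfold dotProduct
  rw [covariance_fun_sum_left (fun i => (piGauss_memLp n i).mul_const (u i)) (piGauss_memLp n j)]
  simp [covariance_mul_const_left, piGauss_cov]

lemma dot_var (n : ℕ) (u : Fin n → ℝ) :
    cov[fun a : Fin n → ℝ => a ⬝ᵥ u, fun a => a ⬝ᵥ u; piGauss n] = u ⬝ᵥ u := by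
  have : cov[fun a : Fin n → ℝ => a ⬝ᵥ u, fun a => ∑ j, a j * u j; piGauss n] = u ⬝ᵥ u := by
    rw [covariance_fun_sum_right (fun i => (piGauss_memLp n i).mul_const (u i)) (dot_memLp n u)]
    simp only [covariance_mul_const_right, dot_cov]
    rfl
  exact this

lemma dot_mean (n : ℕ) (u : Fin n → ℝ) : ∫ a, a ⬝ᵥ u ∂(piGauss n) = 0 := by
  unfold dotProduct
  rw [integral_finsetSum _ (fun i _ => ((piGauss_memLp n i).mul_const (u i)).integrable (by norm_num))]
  simp [integral_mul_const, piGauss_mean]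

/-- the projection functional as a continuous linear map -/
noncomputable def dotCLM (n : ℕ) (u : Fin n → ℝ) : (Fin n → ℝ) →L[ℝ] ℝ :=
  ∑ i, u i • ContinuousLinearMap.proj (R := ℝ) (φ := fun _ : Fin n => ℝ) i

lemma dotCLM_apply (n : ℕ) (u a : Fin n → ℝ) : dotCLM n u a = a ⬝ᵥ u := by
  simp [dotCLM, dotProduct, mul_comm]

lemma dot_map (n : ℕ) (u : Fin n → ℝ) (hu : u ⬝ᵥ u = 1) :
    (piGauss n).map (fun a : Fin n → ℝ => a ⬝ᵥ u) = gaussianReal 0 1 := by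
  have h := (piGauss_gauss n).map_fun (dotCLM n u)
  simp only [dotCLM_apply] at h
  rw [h.map_eq_gaussianReal, dot_mean, ← covariance_self (dot_memLp n u).aestronglyMeasurable.aemeasurable, dot_var, hu]
  simp

lemma dot_indep (n : ℕ) (u : Fin n → ℝ) (hu : u ⬝ᵥ u = 1) :
    IndepFun (fun a : Fin n → ℝ => a ⬝ᵥ u) (fun a j => a j - u j * (a ⬝ᵥ u)) (piGauss n) := by
  have hG : HasGaussianLaw (fun a : Fin n → ℝ =>
      (fun _ : Unit => a ⬝ᵥ u, fun j => a j - u j * (a ⬝ᵥ u))) (piGauss n) := by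
    have h := (piGauss_gauss n).map_fun
      ((ContinuousLinearMap.pi (fun _ : Unit => dotCLM n u)).prod
        (ContinuousLinearMap.pi (fun j => ContinuousLinearMap.proj (R := ℝ)
          (φ := fun _ : Fin n => ℝ) j - u j • dotCLM n u)))
    have e : (fun a : Fin n → ℝ =>
        ((fun _ : Unit => a ⬝ᵥ u, fun j => a j - u j * (a ⬝ᵥ u)) : (Unit → ℝ) × (Fin n → ℝ))) =
        fun a => ((ContinuousLinearMap.pi (fun _ : Unit => dotCLM n u)).prod
        (ContinuousLinearMap.pi (fun j => ContinuousLinearMap.proj (R := ℝ)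
          (φ := fun _ : Fin n => ℝ) j - u j • dotCLM n u))) a := by
      funext a
      refine Prod.ext ?_ ?_
      · ext; simp [dotCLM_apply]
      · ext; simp [dotCLM_apply]
    rw [e]
    exact h
  have hI := HasGaussianLaw.indepFun_of_covariance_eval
    (X := fun (_ : Unit) (a : Fin n → ℝ) => a ⬝ᵥ u)
    (Y := fun j (a : Fin n → ℝ) => a j - u j * (a ⬝ᵥ u)) hG (by
      intro _ j
      have := covariance_sub_right (dot_memLp n u) (piGauss_memLp n j)
        ((dot_memLp n u).const_mul (u j))
      have h2 := covariance_fun_sub_right (dot_memLp n u) (piGauss_memLp n j)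
        ((dot_memLp n u).const_mul (u j))
      rw [h2, dot_cov, covariance_const_mul_right, dot_var, hu]
      ring)
  exact hI.comp (φ := fun f : Unit → ℝ => f ()) (ψ := id) (by fun_prop) measurable_id

lemma dot_W_cov (n : ℕ) (u : Fin n → ℝ) (hu : u ⬝ᵥ u = 1) (i j : Fin n) :
    ∫ a, (a i - u i * (a ⬝ᵥ u)) * (a j - u j * (a ⬝ᵥ u)) ∂(piGauss n)
      = (if i = j then 1 else 0) - u i * u j := by
  have hm : ∀ j, MemLp (fun a : Fin n → ℝ => a j - u j * (a ⬝ᵥ u)) 2 (piGauss n) := fun j =>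
    (piGauss_memLp n j).sub ((dot_memLp n u).const_mul (u j))
  have hz : ∀ j, ∫ a, (a j - u j * (a ⬝ᵥ u)) ∂(piGauss n) = 0 := by
    intro j
    rw [integral_sub ((piGauss_memLp n j).integrable (by norm_num))
      (((dot_memLp n u).const_mul (u j)).integrable (by norm_num)), integral_const_mul,
      piGauss_mean, dot_mean]
    simp
  have hc := covariance_eq_sub (hm i) (hm j)
  rw [hz, hz] at hc
  simp only [Pi.mul_apply, Pi.mul_def, mul_zero, sub_zero] at hc
  rw [← hc]
  rw [covariance_fun_sub_left (piGauss_memLp n i) ((dot_memLp n u).const_mul (u i)) (hm j),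
    covariance_fun_sub_right (piGauss_memLp n i) (piGauss_memLp n j) ((dot_memLp n u).const_mul (u j)),
    covariance_fun_sub_right ((dot_memLp n u).const_mul (u i)) (piGauss_memLp n j)
      ((dot_memLp n u).const_mul (u j)),
    covariance_const_mul_left, covariance_const_mul_left, covariance_const_mul_right,
    covariance_const_mul_right, dot_var, hu, dot_cov,
    covariance_comm (fun a : Fin n → ℝ => a i) (fun a => a ⬝ᵥ u), dot_cov, piGauss_cov]
  ring

lemma main_aux (n : ℕ) (u : Fin n → ℝ) (hu : u ⬝ᵥ u = 1) (F : ℝ → ℝ) (hF : Measurable F)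
    (C : ℝ) (hC : ∀ t, |F t| ≤ C) (i j : Fin n) :
    ∫ a, F (a ⬝ᵥ u) * (a i * a j) ∂(piGauss n) =
      u i * u j * gExp (fun g => g ^ 2 * F g) +
        gExp F * ((if i = j then 1 else 0) - u i * u j) := by
  have hdm : Measurable (fun a : Fin n → ℝ => a ⬝ᵥ u) := by
    unfold dotProduct; fun_prop
  have hFm : AEStronglyMeasurable (fun a : Fin n → ℝ => F (a ⬝ᵥ u)) (piGauss n) :=
    (hF.comp hdm).aestronglyMeasurable
  have hm : ∀ j, MemLp (fun a : Fin n → ℝ => a j - u j * (a ⬝ᵥ u)) 2 (piGauss n) := fun j =>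
    (piGauss_memLp n j).sub ((dot_memLp n u).const_mul (u j))
  have hb : ∀ᵐ a : Fin n → ℝ ∂(piGauss n), ‖F (a ⬝ᵥ u)‖ ≤ C := ae_of_all _ fun a => hC _
  have hz : ∀ j, ∫ a, (a j - u j * (a ⬝ᵥ u)) ∂(piGauss n) = 0 := by
    intro j
    rw [integral_sub ((piGauss_memLp n j).integrable (by norm_num))
      (((dot_memLp n u).const_mul (u j)).integrable (by norm_num)), integral_const_mul,
      piGauss_mean, dot_mean]
    simp
  have hI := dot_indep n u hu
  have key : ∀ G : ℝ → ℝ, Measurable G → ∫ a, G (a ⬝ᵥ u) ∂(piGauss n) = gExp G := by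
    intro G hG
    unfold gExp
    rw [← dot_map n u hu, integral_map hdm.aemeasurable hG.aestronglyMeasurable]
  have i1 : Integrable (fun a : Fin n → ℝ => F (a ⬝ᵥ u) * ((a ⬝ᵥ u) * (a ⬝ᵥ u))) (piGauss n) :=
    ((dot_memLp n u).integrable_mul (dot_memLp n u)).bdd_mul hFm hb
  have i2 : ∀ j, Integrable (fun a : Fin n → ℝ =>
      F (a ⬝ᵥ u) * ((a ⬝ᵥ u) * (a j - u j * (a ⬝ᵥ u)))) (piGauss n) := fun j =>
    ((dot_memLp n u).integrable_mul (hm j)).bdd_mul hFm hb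
  have i3 : Integrable (fun a : Fin n → ℝ =>
      F (a ⬝ᵥ u) * ((a i - u i * (a ⬝ᵥ u)) * (a j - u j * (a ⬝ᵥ u)))) (piGauss n) :=
    ((hm i).integrable_mul (hm j)).bdd_mul hFm hb
  have e1 : ∫ a, F (a ⬝ᵥ u) * ((a ⬝ᵥ u) * (a ⬝ᵥ u)) ∂(piGauss n) = gExp (fun g => g ^ 2 * F g) := by
    rw [← key _ (by fun_prop)]
    congr 1; ext a; ring
  have e2 : ∀ j, ∫ a, F (a ⬝ᵥ u) * ((a ⬝ᵥ u) * (a j - u j * (a ⬝ᵥ u))) ∂(piGauss n) = 0 := by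
    intro j
    have h := (hI.comp (φ := fun t => F t * t) (ψ := fun w : Fin n → ℝ => w j) (by fun_prop)
      (by fun_prop)).integral_fun_mul_eq_mul_integral
      (by fun_prop) (hm j).aestronglyMeasurable
    simp only [Function.comp_def] at h
    rw [hz, mul_zero] at h
    rw [← h]; congr 1; ext a; ring
  have e3 : ∫ a, F (a ⬝ᵥ u) * ((a i - u i * (a ⬝ᵥ u)) * (a j - u j * (a ⬝ᵥ u))) ∂(piGauss n)
      = gExp F * ((if i = j then 1 else 0) - u i * u j) := by
    have h := (hI.comp (φ := F) (ψ := fun w : Fin n → ℝ => w i * w j) hF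
      (by fun_prop)).integral_fun_mul_eq_mul_integral
      hFm ((hm i).integrable_mul (hm j)).aestronglyMeasurable
    simp only [Function.comp_def] at h
    rw [h, key F hF, dot_W_cov n u hu]
  have hdec : ∀ a : Fin n → ℝ, F (a ⬝ᵥ u) * (a i * a j) =
      ((u i * u j * (F (a ⬝ᵥ u) * ((a ⬝ᵥ u) * (a ⬝ᵥ u)))
      + u i * (F (a ⬝ᵥ u) * ((a ⬝ᵥ u) * (a j - u j * (a ⬝ᵥ u)))))
      + u j * (F (a ⬝ᵥ u) * ((a ⬝ᵥ u) * (a i - u i * (a ⬝ᵥ u)))))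
      + F (a ⬝ᵥ u) * ((a i - u i * (a ⬝ᵥ u)) * (a j - u j * (a ⬝ᵥ u))) := fun a => by ring
  simp_rw [hdec]
  have j1 := i1.const_mul (u i * u j)
  have j2 := (i2 j).const_mul (u i)
  have j3 := (i2 i).const_mul (u j)
  have j12 : Integrable (fun a : Fin n → ℝ => u i * u j * (F (a ⬝ᵥ u) * ((a ⬝ᵥ u) * (a ⬝ᵥ u)))
      + u i * (F (a ⬝ᵥ u) * ((a ⬝ᵥ u) * (a j - u j * (a ⬝ᵥ u))))) (piGauss n) := j1.add j2
  have j123 : Integrable (fun a : Fin n → ℝ =>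
      (u i * u j * (F (a ⬝ᵥ u) * ((a ⬝ᵥ u) * (a ⬝ᵥ u)))
      + u i * (F (a ⬝ᵥ u) * ((a ⬝ᵥ u) * (a j - u j * (a ⬝ᵥ u)))))
      + u j * (F (a ⬝ᵥ u) * ((a ⬝ᵥ u) * (a i - u i * (a ⬝ᵥ u))))) (piGauss n) := j12.add j3
  rw [integral_add j123 i3, integral_add j12 j3, integral_add j1 j2,
    integral_const_mul, integral_const_mul, integral_const_mul, e1, e2, e2, e3]
  ring

lemma phiInd_meas (b c : ℝ) : Measurable (phiInd b c) := by
  unfold phiInd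
  refine Measurable.ite ?_ measurable_const measurable_const
  exact (measurableSet_lt measurable_const measurable_norm).inter
    (measurableSet_lt measurable_norm measurable_const)

lemma phi_pow_bound (b c : ℝ) (k : ℕ) (t : ℝ) : |(|t| ^ k * phiInd b c t)| ≤ |c| ^ k := by
  unfold phiInd
  split_ifs with h
  · rw [mul_one, abs_pow, abs_abs]
    exact pow_le_pow_left₀ (abs_nonneg _) (h.2.le.trans (le_abs_self c)) _
  · simp

lemma phi_int (b c : ℝ) (k : ℕ) :
    Integrable (fun t => |t| ^ k * phiInd b c t) (gaussianReal 0 1) := by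
  have := phiInd_meas b c
  refine Integrable.of_bound (C := |c| ^ k) ?_ (ae_of_all _ (phi_pow_bound b c k))
  exact Measurable.aestronglyMeasurable (((measurable_norm (α := ℝ)).pow_const k).mul this)

/-- Let `a ~ N(0, I_n)`, `s ≠ 0`, `η ∈ ℝ`, `1 + η/‖s‖₂ < α₁ < α₂`, and
`y = |⟨a,s⟩| + η`.  With `φ₁(t) = 1{α₁ − η/‖s‖₂ < |t| < α₂ − η/‖s‖₂}` and, for
`g ~ N(0,1)`, `γ₁ = E[|g|φ₁(g)]`, `β₁ = E[|g|³φ₁(g)] − γ₁`, `γ̌₁ = E[φ₁(g)]`,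
`β̌₁ = E[g²φ₁(g)] − γ̌₁`, the matrix `E[y · a aᵀ · 1{α₁‖s‖₂ < y < α₂‖s‖₂}]` equals
`‖s‖₂ (γ₁ I_n + β₁ s̄ s̄ᵀ) + η (γ̌₁ I_n + β̌₁ s̄ s̄ᵀ)` (stated entrywise). -/
theorem stmt_7 (n : ℕ) (s : Fin n → ℝ) (hs : s ≠ 0) (η α₁ α₂ : ℝ)
    (h1 : 1 + η / l2norm s < α₁) (h2 : α₁ < α₂) (i j : Fin n) :
    (∫ a : Fin n → ℝ,
        (if α₁ * l2norm s < |a ⬝ᵥ s| + η ∧ |a ⬝ᵥ s| + η < α₂ * l2norm s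
          then (|a ⬝ᵥ s| + η) * (a i * a j) else 0) ∂(piGauss n)) =
      l2norm s *
        (gExp (fun g => |g| * phiInd (α₁ - η / l2norm s) (α₂ - η / l2norm s) g) *
            (if i = j then (1 : ℝ) else 0) +
          (gExp (fun g => |g| ^ 3 * phiInd (α₁ - η / l2norm s) (α₂ - η / l2norm s) g) -
              gExp (fun g => |g| * phiInd (α₁ - η / l2norm s) (α₂ - η / l2norm s) g)) *
            ((s i / l2norm s) * (s j / l2norm s))) +
      η *
        (gExp (phiInd (α₁ - η / l2norm s) (α₂ - η / l2norm s)) *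
            (if i = j then (1 : ℝ) else 0) +
          (gExp (fun g => g ^ 2 * phiInd (α₁ - η / l2norm s) (α₂ - η / l2norm s) g) -
              gExp (phiInd (α₁ - η / l2norm s) (α₂ - η / l2norm s))) *
            ((s i / l2norm s) * (s j / l2norm s))) := by
  have hsum : 0 < ∑ k, (s k) ^ 2 := by
    obtain ⟨k, hk⟩ := Function.ne_iff.mp hs
    exact Finset.sum_pos' (fun _ _ => sq_nonneg _) ⟨k, Finset.mem_univ _, by have : s k ≠ 0 := hk; positivity⟩
  have hL : 0 < l2norm s := Real.sqrt_pos.mpr hsum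
  have hL2 : l2norm s ^ 2 = ∑ k, (s k) ^ 2 := Real.sq_sqrt hsum.le
  set L := l2norm s with hLdef
  set b := α₁ - η / L with hb
  set c := α₂ - η / L with hc
  set u : Fin n → ℝ := fun k => s k / L with hudef
  have hu : u ⬝ᵥ u = 1 := by
    simp only [dotProduct, hudef]
    have : ∀ k, s k / L * (s k / L) = s k ^ 2 / L ^ 2 := fun k => by field_simp
    simp_rw [this]
    rw [← Finset.sum_div, hL2, div_self hsum.ne']
  have hdot : ∀ a : Fin n → ℝ, a ⬝ᵥ s = L * (a ⬝ᵥ u) := by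
    intro a
    simp only [dotProduct, hudef, Finset.mul_sum]
    refine Finset.sum_congr rfl fun k _ => ?_
    field_simp
  set F : ℝ → ℝ := fun t => L * (|t| * phiInd b c t) + η * phiInd b c t with hF
  have hpm := phiInd_meas b c
  have hFm : Measurable F := by
    have h := (measurable_norm (α := ℝ)).mul hpm
    exact (h.const_mul L).add (hpm.const_mul η)
  have hFb : ∀ t, |F t| ≤ L * |c| + |η| := by
    intro t
    have h1 := phi_pow_bound b c 1 t
    have h0 := phi_pow_bound b c 0 t
    simp only [pow_one, pow_zero, one_mul] at h1 h0
    refine (abs_add_le _ _).trans ?_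
    rw [abs_mul, abs_mul η, abs_of_pos hL]
    have := mul_le_mul_of_nonneg_left h1 hL.le
    have := mul_le_mul_of_nonneg_left h0 (abs_nonneg η)
    linarith
  have hint : ∀ a : Fin n → ℝ, (if α₁ * L < |a ⬝ᵥ s| + η ∧ |a ⬝ᵥ s| + η < α₂ * L
          then (|a ⬝ᵥ s| + η) * (a i * a j) else 0) = F (a ⬝ᵥ u) * (a i * a j) := by
    intro a
    rw [hdot a, abs_mul, abs_of_pos hL]
    have e1 : α₁ * L < L * |a ⬝ᵥ u| + η ↔ b < |a ⬝ᵥ u| := by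
      have : L * b = α₁ * L - η := by rw [hb]; field_simp
      rw [← mul_lt_mul_iff_right₀ hL (b := b), this]; constructor <;> intro h <;> linarith
    have e2 : L * |a ⬝ᵥ u| + η < α₂ * L ↔ |a ⬝ᵥ u| < c := by
      have : L * c = α₂ * L - η := by rw [hc]; field_simp
      rw [← mul_lt_mul_iff_right₀ hL (c := c), this]; constructor <;> intro h <;> linarith
    simp only [e1, e2, hF, phiInd]
    split_ifs <;> ring
  simp_rw [hint]
  rw [main_aux n u hu F hFm _ hFb i j]
  have i0 := phi_int b c 0
  have i1 := phi_int b c 1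
  have i2 := phi_int b c 2
  have i3 := phi_int b c 3
  simp only [pow_one, pow_zero, one_mul, sq_abs] at i0 i1 i2
  have g1 : gExp F = L * gExp (fun g => |g| * phiInd b c g) + η * gExp (phiInd b c) := by
    unfold gExp
    rw [hF, integral_add (i1.const_mul L) (i0.const_mul η), integral_const_mul, integral_const_mul]
  have g2 : gExp (fun g => g ^ 2 * F g) = L * gExp (fun g => |g| ^ 3 * phiInd b c g)
      + η * gExp (fun g => g ^ 2 * phiInd b c g) := by
    unfold gExp
    rw [← integral_const_mul, ← integral_const_mul, ← integral_add (i3.const_mul L) (i2.const_mul η)]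
    congr 1; ext g
    simp only [hF, ← sq_abs g]
    ring
  rw [g1, g2]
  ring
end

section
/- Let a ~ N(0, I_n) be a standard Gaussian vector in ℝ^n, let x ∈ ℝ^n be nonzero with x̄ = x/‖x‖₂, let 1 < l < u, and set y = |⟨a, x⟩|. Then the matrix J := E[ y · a aᵀ · 1{l‖x‖₂ < y < u‖x‖₂} ] equals ‖x‖₂ (γ₀ I_n + β₀ x̄ x̄ᵀ), where γ₀ = E[|g| 1{l < |g| < u}] and β₀ = E[|g|³ 1{l < |g| < u}] − γ₀ for g ~ N(0,1). Moreover β₀ > 0, so x̄ is an eigenvector of J with eigenvalue ‖x‖₂(γ₀ + β₀), every vector orthogonal to x̄ is an eigenvector with eigenvalue ‖x‖₂ γ₀, and ‖x‖₂(γ₀ + β₀) > ‖x‖₂ γ₀; i.e., x̄ (up to sign) spans the leading eigenspace of J. -/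
open MeasureTheory ProbabilityTheory Matrix

/-- `γ₀ = E[|g| 1{l < |g| < u}]` for `g ~ N(0,1)`. -/
noncomputable def gamma0 (l u : ℝ) : ℝ :=
  ∫ g, (if l < |g| ∧ |g| < u then |g| else 0) ∂(gaussianReal 0 1)

/-- `β₀ = E[|g|³ 1{l < |g| < u}] − γ₀` for `g ~ N(0,1)`. -/
noncomputable def beta0 (l u : ℝ) : ℝ :=
  (∫ g, (if l < |g| ∧ |g| < u then |g| ^ 3 else 0) ∂(gaussianReal 0 1)) - gamma0 l u

noncomputable def phi (l u g : ℝ) : ℝ := if l < |g| ∧ |g| < u then |g| else 0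

lemma measurable_phi (l u : ℝ) : Measurable (phi l u) := by
  unfold phi
  refine Measurable.ite ?_ (by fun_prop) measurable_const
  exact (measurableSet_lt measurable_const (continuous_abs.measurable)).inter
    (measurableSet_lt continuous_abs.measurable measurable_const)

lemma phi_integrable (l u : ℝ) (m : ℕ) :
    Integrable (fun g => phi l u g * g ^ m) (gaussianReal 0 1) := by
  refine Integrable.of_bound
    (((measurable_phi l u).mul (measurable_id.pow_const m)).aestronglyMeasurable)
    (|u| * |u| ^ m) (ae_of_all _ fun g => ?_)
  rw [Real.norm_eq_abs, abs_mul, abs_pow]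
  unfold phi
  split_ifs with h
  · have : |g| ≤ |u| := h.2.le.trans (le_abs_self u)
    rw [abs_abs]
    gcongr
  · simp only [abs_zero, zero_mul]
    positivity

lemma pow_integrable (m : ℕ) : Integrable (fun g : ℝ => g ^ m) (gaussianReal 0 1) := by
  have h := (memLp_id_gaussianReal (μ := 0) (v := 1) (m : NNReal)).integrable_norm_pow'
  have h2 : Integrable (fun g : ℝ => ‖g ^ m‖) (gaussianReal 0 1) := by
    simpa [norm_pow] using h
  exact (integrable_norm_iff (by fun_prop)).1 h2

lemma second_moment : ∫ g, g ^ 2 ∂(gaussianReal 0 1) = 1 := by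
  have h := variance_fun_id_gaussianReal (μ := 0) (v := 1)
  rw [variance_of_integral_eq_zero (by fun_prop) integral_id_gaussianReal] at h
  simpa using h

lemma beta_eq (l u : ℝ) : beta0 l u = (∫ g, phi l u g * g ^ 2 ∂(gaussianReal 0 1)) -
    ∫ g, phi l u g ∂(gaussianReal 0 1) := by
  unfold beta0 gamma0 phi
  congr 2
  ext g
  split_ifs
  · rw [← sq_abs g]; ring
  · simp

lemma beta_pos (l u : ℝ) (hl : 1 < l) (hlu : l < u) : 0 < beta0 l u := by
  have h0 : Integrable (fun g => phi l u g) (gaussianReal 0 1) := by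
    simpa using phi_integrable l u 0
  have h1 : Integrable (fun g => phi l u g * g ^ 2 - phi l u g) (gaussianReal 0 1) :=
    (phi_integrable l u 2).sub h0
  rw [beta_eq, ← integral_sub (phi_integrable l u 2) h0,
    integral_pos_iff_support_of_nonneg _ h1]
  · have hs : Set.Ioo l u ⊆ Function.support (fun g => phi l u g * g ^ 2 - phi l u g) := by
      intro g hg
      have hg0 : 0 < g := by linarith [hg.1]
      have : l < g ∧ g < u := hg
      simp only [Function.mem_support, phi, abs_of_pos hg0, if_pos this]
      have : 1 < g := by linarith [hg.1]
      have : 0 < g * (g ^ 2 - 1) := by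
        apply mul_pos hg0; nlinarith
      intro h; nlinarith
    refine lt_of_lt_of_le ?_ (measure_mono hs)
    rw [pos_iff_ne_zero]
    intro h
    have := gaussianReal_absolutelyContinuous' 0 (v := 1) one_ne_zero h
    simp at this
    linarith
  · intro g
    simp only [Pi.zero_apply, phi]
    split_ifs with h
    · have : 1 < |g| := by linarith [h.1]
      rw [← sq_abs g]
      nlinarith [mul_pos (show 0 < |g| by linarith) (show 0 < |g| ^ 2 - 1 by nlinarith)]
    · simp

/-- the factor attached to coordinate `k` -/
noncomputable def fac {n : ℕ} (l u : ℝ) (o p q k : Fin n) (g : ℝ) : ℝ :=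
  (if k = o then phi l u g else 1) * g ^ ((if k = p then 1 else 0) + (if k = q then 1 else 0) : ℕ)

lemma fac_integrable {n : ℕ} (l u : ℝ) (o p q k : Fin n) :
    Integrable (fac l u o p q k) (gaussianReal 0 1) := by
  unfold fac
  by_cases h : k = o
  · simp only [if_pos h]
    exact phi_integrable l u _
  · simp only [if_neg h, one_mul]
    exact pow_integrable _

lemma fac_prod {n : ℕ} (l u : ℝ) (o p q : Fin n) (z : Fin n → ℝ) :
    ∏ k, fac l u o p q k (z k) = phi l u (z o) * (z p * z q) := by
  simp only [fac, Finset.prod_mul_distrib, pow_add, pow_ite, pow_one, pow_zero]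
  simp [Finset.prod_ite_eq']

lemma mom_integrable {n : ℕ} (l u : ℝ) (o p q : Fin n) :
    Integrable (fun z : Fin n → ℝ => phi l u (z o) * (z p * z q)) (piGauss n) := by
  simp_rw [← fac_prod]
  exact Integrable.fintype_prod (fun k => fac_integrable l u o p q k)

lemma mom_integral {n : ℕ} (l u : ℝ) (o p q : Fin n) :
    ∫ z : Fin n → ℝ, phi l u (z o) * (z p * z q) ∂(piGauss n) =
      if p = q then gamma0 l u + (if p = o then beta0 l u else 0) else 0 := by
  simp_rw [← fac_prod]
  unfold piGauss
  rw [integral_fintype_prod_eq_prod]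
  split_ifs with h1 h2
  · subst h1 h2
    rw [Finset.prod_eq_single p]
    · rw [beta_eq]; simp [fac, gamma0, phi]
    · intro k _ hk
      simp [fac, hk]
    · simp
  · subst h1
    rw [Finset.prod_eq_mul o p (Ne.symm h2)]
    · simp [fac, h2, Ne.symm h2, gamma0, phi, second_moment]
    · intro k _ hk
      simp [fac, hk.1, hk.2]
    · simp
    · simp
  · have : p ≠ o ∨ q ≠ o := by
      by_contra! h
      exact h1 (h.1.trans h.2.symm)
    rcases this with h | h
    · apply Finset.prod_eq_zero (Finset.mem_univ p)
      simp [fac, h, h1]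
    · apply Finset.prod_eq_zero (Finset.mem_univ q)
      simp [fac, h, Ne.symm h1]

lemma l2norm_eq_s8 {n : ℕ} (x : Fin n → ℝ) : l2norm x = ‖WithLp.toLp 2 x‖ := by
  rw [EuclideanSpace.norm_eq]; simp [l2norm]

lemma map_gauss {n : ℕ} (b : OrthonormalBasis (Fin n) ℝ (EuclideanSpace ℝ (Fin n))) :
    (piGauss n).map (fun z k => ∑ i, z i * b i k) = piGauss n := by
  have h1 := map_pi_eq_stdGaussian (ι := Fin n)
  have h2 := stdGaussian_eq_map_pi_orthonormalBasis b
  rw [← h1] at h2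
  have h3 := congrArg (Measure.map (WithLp.ofLp (p := 2))) h2
  rw [Measure.map_map (by fun_prop) (by fun_prop), Measure.map_map (by fun_prop) (by fun_prop)] at h3
  have e1 : (WithLp.ofLp (p := 2)) ∘ (WithLp.toLp 2) = (id : (Fin n → ℝ) → _) := rfl
  rw [e1, Measure.map_id] at h3
  unfold piGauss
  conv_rhs => rw [h3]
  congr 1
  ext z k
  simp

lemma exists_basis {n : ℕ} (x : Fin n → ℝ) (hx : x ≠ 0) :
    ∃ (o : Fin n) (b : OrthonormalBasis (Fin n) ℝ (EuclideanSpace ℝ (Fin n))),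
      b o = (1 / l2norm x) • WithLp.toLp 2 x := by
  obtain ⟨o, _⟩ := Function.ne_iff.1 hx
  have hN : ‖WithLp.toLp 2 x‖ ≠ 0 := by simpa using hx
  have hv : Orthonormal ℝ (Set.domRestrict ({o} : Set (Fin n))
      (fun _ => (1 / l2norm x) • WithLp.toLp 2 x)) := by
    constructor
    · intro i
      simp only [Set.domRestrict_apply]
      rw [norm_smul, l2norm_eq_s8]
      simp [hN, hx]
    · intro i j hij
      exact absurd (Subsingleton.elim i j) hij
  obtain ⟨b, hb⟩ := hv.exists_orthonormalBasis_extension_of_card_eq (by simp)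
  exact ⟨o, b, hb o rfl⟩

lemma J_formula (n : ℕ) (x : Fin n → ℝ) (hx : x ≠ 0) (l u : ℝ) (i j : Fin n) :
      ∫ a : Fin n → ℝ,
        (if l * l2norm x < |a ⬝ᵥ x| ∧ |a ⬝ᵥ x| < u * l2norm x
          then |a ⬝ᵥ x| * (a i * a j) else 0) ∂(piGauss n) = l2norm x *
        (gamma0 l u * (if i = j then (1 : ℝ) else 0) +
          beta0 l u * ((x i / l2norm x) * (x j / l2norm x))) := by
  have hN : 0 < l2norm x := by
    rw [l2norm_eq_s8]; simpa using hx
  obtain ⟨o, b, hb⟩ := exists_basis x hx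
  have hbo : ∀ k, b o k = x k / l2norm x := by
    intro k; rw [hb]; simp; ring
  have hxk : ∀ k, x k = l2norm x * b o k := by
    intro k; rw [hbo]; field_simp
  have hdot : ∀ z : Fin n → ℝ, (fun k => ∑ i, z i * b i k) ⬝ᵥ x = l2norm x * z o := by
    intro z
    have h1 : ∀ i, ∑ k, b i k * b o k = if i = o then 1 else 0 := by
      intro i
      have := orthonormal_iff_ite.1 b.orthonormal i o
      rw [PiLp.inner_apply] at this
      rw [← this]
      refine Finset.sum_congr rfl fun k _ => ?_
      simp [mul_comm]
    simp only [dotProduct]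
    calc ∑ k, (∑ i, z i * b i k) * x k = ∑ k, ∑ i, l2norm x * (z i * (b i k * b o k)) := by
          refine Finset.sum_congr rfl fun k _ => ?_
          rw [hxk k, Finset.sum_mul]
          refine Finset.sum_congr rfl fun i _ => ?_
          ring
      _ = l2norm x * ∑ i, z i * ∑ k, b i k * b o k := by
          rw [Finset.sum_comm]
          simp only [Finset.mul_sum]
      _ = _ := by simp [h1]
  have hpars : ∑ p, b p i * b p j = if i = j then (1 : ℝ) else 0 := by
    have := b.sum_inner_mul_inner (EuclideanSpace.single i 1) (EuclideanSpace.single j 1)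
    simpa [EuclideanSpace.inner_single_left, EuclideanSpace.inner_single_right, eq_comm] using this
  have hmeas : Measurable (fun a : Fin n → ℝ =>
        (if l * l2norm x < |a ⬝ᵥ x| ∧ |a ⬝ᵥ x| < u * l2norm x
          then |a ⬝ᵥ x| * (a i * a j) else 0)) := by
    have hd : Measurable (fun a : Fin n → ℝ => |a ⬝ᵥ x|) := by
      unfold dotProduct; fun_prop
    refine Measurable.ite ?_ (by fun_prop) (by fun_prop)
    exact (measurableSet_lt measurable_const hd).inter (measurableSet_lt hd measurable_const)
  rw [← map_gauss b, integral_map (Measurable.aemeasurable (by fun_prop)) hmeas.aestronglyMeasurable]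
  have hint : ∀ z : Fin n → ℝ,
      (if l * l2norm x < |(fun k => ∑ i, z i * b i k) ⬝ᵥ x| ∧
          |(fun k => ∑ i, z i * b i k) ⬝ᵥ x| < u * l2norm x
        then |(fun k => ∑ i, z i * b i k) ⬝ᵥ x| * ((∑ p, z p * b p i) * (∑ q, z q * b q j)) else 0)
      = ∑ p, ∑ q, (l2norm x * (b p i * b q j)) * (phi l u (z o) * (z p * z q)) := by
    intro z
    rw [hdot, abs_mul, abs_of_pos hN]
    have hc : (l * l2norm x < l2norm x * |z o| ∧ l2norm x * |z o| < u * l2norm x) ↔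
        (l < |z o| ∧ |z o| < u) := by
      rw [mul_comm l, mul_comm u, mul_lt_mul_iff_right₀ hN, mul_lt_mul_iff_right₀ hN]
    simp only [hc, phi]
    split_ifs
    · rw [Finset.sum_mul_sum, Finset.mul_sum]
      refine Finset.sum_congr rfl fun p _ => ?_
      rw [Finset.mul_sum]
      refine Finset.sum_congr rfl fun q _ => ?_
      ring
    · simp
  simp only [hint]
  rw [integral_finsetSum _ fun p _ => integrable_finsetSum _ fun q _ =>
    (mom_integrable l u o p q).const_mul _]
  have hin : ∀ p, ∫ z : Fin n → ℝ, ∑ q, (l2norm x * (b p i * b q j)) *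
      (phi l u (z o) * (z p * z q)) ∂(piGauss n) =
      l2norm x * gamma0 l u * (b p i * b p j) +
        (if p = o then l2norm x * beta0 l u * (b p i * b p j) else 0) := by
    intro p
    rw [integral_finsetSum _ fun q _ => (mom_integrable l u o p q).const_mul _]
    simp only [integral_const_mul, mom_integral]
    simp only [mul_ite, mul_zero, Finset.sum_ite_eq, Finset.mem_univ, if_true]
    split_ifs <;> ring
  simp only [hin]
  rw [Finset.sum_add_distrib, ← Finset.mul_sum, hpars]
  simp only [Finset.sum_ite_eq', Finset.mem_univ, if_true, hbo]
  ring

/-- Let `a ~ N(0, I_n)`, `x ≠ 0` with `x̄ = x/‖x‖₂`, `1 < l < u`, `y = |⟨a,x⟩|`, and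
`J = E[y · a aᵀ · 1{l‖x‖₂ < y < u‖x‖₂}]`.  Then `J = ‖x‖₂ (γ₀ I_n + β₀ x̄ x̄ᵀ)`,
`β₀ > 0`, `x̄` is an eigenvector of `J` with eigenvalue `‖x‖₂(γ₀ + β₀)`, every vector
orthogonal to `x̄` is an eigenvector with eigenvalue `‖x‖₂ γ₀`, and
`‖x‖₂ γ₀ < ‖x‖₂(γ₀ + β₀)`: the normalized signal spans the leading eigenspace. -/
theorem stmt_8 (n : ℕ) (x : Fin n → ℝ) (hx : x ≠ 0) (l u : ℝ) (hl : 1 < l) (hlu : l < u)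
    (J : Matrix (Fin n) (Fin n) ℝ)
    (hJ : ∀ i j, J i j =
      ∫ a : Fin n → ℝ,
        (if l * l2norm x < |a ⬝ᵥ x| ∧ |a ⬝ᵥ x| < u * l2norm x
          then |a ⬝ᵥ x| * (a i * a j) else 0) ∂(piGauss n)) :
    (∀ i j, J i j = l2norm x *
        (gamma0 l u * (if i = j then (1 : ℝ) else 0) +
          beta0 l u * ((x i / l2norm x) * (x j / l2norm x)))) ∧
    0 < beta0 l u ∧
    J.mulVec ((1 / l2norm x) • x) =
      (l2norm x * (gamma0 l u + beta0 l u)) • ((1 / l2norm x) • x) ∧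
    (∀ v : Fin n → ℝ, v ⬝ᵥ ((1 / l2norm x) • x) = 0 →
      J.mulVec v = (l2norm x * gamma0 l u) • v) ∧
    l2norm x * gamma0 l u < l2norm x * (gamma0 l u + beta0 l u) := by
  have hN : 0 < l2norm x := by
    rw [l2norm_eq_s8]; simpa using hx
  have hβ := beta_pos l u hl hlu
  have hF : ∀ i j, J i j = l2norm x *
        (gamma0 l u * (if i = j then (1 : ℝ) else 0) +
          beta0 l u * ((x i / l2norm x) * (x j / l2norm x))) := fun i j => by
    rw [hJ, J_formula n x hx l u i j]
  have hmul : ∀ (v : Fin n → ℝ) i, J.mulVec v i = l2norm x * gamma0 l u * v i +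
      beta0 l u * x i * (v ⬝ᵥ ((1 / l2norm x) • x)) := by
    intro v i
    simp only [mulVec, dotProduct, hF, Pi.smul_apply, smul_eq_mul, Finset.mul_sum]
    have : l2norm x * gamma0 l u * v i =
        ∑ j, l2norm x * gamma0 l u * (if i = j then v j else 0) := by
      simp
    rw [this, ← Finset.sum_add_distrib]
    refine Finset.sum_congr rfl fun j _ => ?_
    split_ifs <;> field_simp <;> ring
  have hxx : x ⬝ᵥ x = l2norm x ^ 2 := by
    unfold l2norm
    rw [Real.sq_sqrt (Finset.sum_nonneg fun i _ => sq_nonneg _)]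
    simp [dotProduct, sq]
  refine ⟨hF, hβ, ?_, ?_, ?_⟩
  · ext i
    rw [hmul]
    simp only [smul_dotProduct, dotProduct_smul, hxx, Pi.smul_apply, smul_eq_mul]
    field_simp
  · intro v hv
    ext i
    rw [hmul, hv]
    simp
  · have := mul_pos hN hβ
    linarith
end
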